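/- arXiv:2402.18290 — 2 statements merged into one kernel-verified Lean document; each statement's English description precedes it below -/
import Mathlib

section
/- For h = 6, the image of the boundary map ∂ is a subgroup of index 2 in the group of all group automorphisms φ of ℤ⁶/A₆ℤ⁶ satisfying ∂λ(φ(ξ),φ(η)) = ∂λ(ξ,η) and ∂θ(φ(ξ)) = ∂θ(ξ) for all ξ, η; in particular ∂ is not surjective, so there exists an automorphism of the boundary forms that is not of the form [x] ↦ [(P^T)^{-1}x] for any P ∈ GL₆(ℤ) with P^T A₆ P = A₆. -/
open Matrix

noncomputable section

/-- The matrix `Q_h`: first row all `4`; in rows `2,…,h` diagonal and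
above-diagonal entries are `2`, below-diagonal entries are `0`. -/
def Qmat (h : ℕ) : Matrix (Fin h) (Fin h) ℤ :=
  Matrix.of fun i j => if (i : ℕ) = 0 then 4 else if i ≤ j then 2 else 0

/-- `A_h = Q_h + Q_hᵀ`. -/
def Amat (h : ℕ) : Matrix (Fin h) (Fin h) ℤ := Qmat h + (Qmat h)ᵀ

/-- `A_h` viewed as a rational matrix. -/
def AmatQ (h : ℕ) : Matrix (Fin h) (Fin h) ℚ := (Amat h).map (Int.cast)

/-- `Q_h` viewed as a rational matrix. -/
def QmatQ (h : ℕ) : Matrix (Fin h) (Fin h) ℚ := (Qmat h).map (Int.cast)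

/-- The cokernel `ℤ^h / A_h ℤ^h`. -/
abbrev Coker (h : ℕ) := (Fin h → ℤ) ⧸ LinearMap.range ((Amat h).mulVecLin)

/-- The quotient map `ℤ^h → ℤ^h / A_h ℤ^h`. -/
def ckMk {h : ℕ} (x : Fin h → ℤ) : Coker h := Submodule.Quotient.mk x

def ratVec {h : ℕ} (x : Fin h → ℤ) : Fin h → ℚ := fun i => (x i : ℚ)

/-- The boundary linking form `∂λ` computed on representatives:
`x ᵀ A_h⁻¹ y mod ℤ`, valued in `ℚ/ℤ`. -/
def linkR (h : ℕ) (x y : Fin h → ℤ) : AddCircle (1 : ℚ) :=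
  ((ratVec x ⬝ᵥ ((AmatQ h)⁻¹ *ᵥ ratVec y) : ℚ) : AddCircle (1 : ℚ))

/-- The boundary quadratic form `∂θ` computed on representatives:
`xᵀ A_h⁻¹ Q_h A_h⁻¹ x mod ℤ`, valued in `ℚ/ℤ`. -/
def quadR (h : ℕ) (x : Fin h → ℤ) : AddCircle (1 : ℚ) :=
  ((ratVec x ⬝ᵥ (((AmatQ h)⁻¹ * QmatQ h * (AmatQ h)⁻¹) *ᵥ ratVec x) : ℚ) : AddCircle (1 : ℚ))
/-- φ preserves the boundary linking form ∂λ and the boundary quadratic form ∂θ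
(stated on integer representatives). -/
def PreservesBoundaryForms (h : ℕ) (φ : Coker h ≃+ Coker h) : Prop :=
  (∀ x y x' y' : Fin h → ℤ, ckMk x' = φ (ckMk x) → ckMk y' = φ (ckMk y) →
    linkR h x' y' = linkR h x y) ∧
  (∀ x x' : Fin h → ℤ, ckMk x' = φ (ckMk x) → quadR h x' = quadR h x)

/-- φ lies in the image of the boundary map ∂, i.e. φ([x]) = [(Pᵀ)⁻¹ x] for some isometry
P ∈ GL_h(ℤ) of A_h. -/
def InBoundaryImage (h : ℕ) (φ : Coker h ≃+ Coker h) : Prop :=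
  ∃ P : Matrix (Fin h) (Fin h) ℤ, IsUnit P.det ∧ Pᵀ * Amat h * P = Amat h ∧
    ∀ x : Fin h → ℤ, φ (ckMk x) = ckMk ((Pᵀ)⁻¹ *ᵥ x)

def Tm : Matrix (Fin 6) (Fin 6) ℤ :=
  !![1,0,0,0,0,0; -1,2,0,0,0,0; -1,0,2,0,0,0; -1,0,0,2,0,0; -1,0,0,0,2,0; -1,0,0,0,0,2]

/-- Columns: the basis `2e₀, e₀+e₁, …, e₀+e₅` of the root lattice `D₆`. -/
def Cm : Matrix (Fin 6) (Fin 6) ℤ :=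
  !![2,1,1,1,1,1; 0,1,0,0,0,0; 0,0,1,0,0,0; 0,0,0,1,0,0; 0,0,0,0,1,0; 0,0,0,0,0,1]

/-- Twice the coordinates of the dual-lattice vector represented by `x`. -/
def Zc (x : Fin 6 → ℤ) : Fin 6 → ℤ := Tm *ᵥ x

lemma A6 : Amat 6 = !![8,4,4,4,4,4; 4,4,2,2,2,2; 4,2,4,2,2,2; 4,2,2,4,2,2; 4,2,2,2,4,2; 4,2,2,2,2,4] := by
  unfold Amat Qmat; decide

lemma A_eq : Amat 6 = (2:ℤ) • (Cmᵀ * Cm) := by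
  rw [A6]; unfold Cm; decide

lemma TC : Tm * Cmᵀ = (2:ℤ) • (1 : Matrix (Fin 6) (Fin 6) ℤ) := by
  unfold Cm Tm; decide

lemma CT : Cmᵀ * Tm = (2:ℤ) • (1 : Matrix (Fin 6) (Fin 6) ℤ) := by
  unfold Cm Tm; decide

lemma AS : Amat 6 * (Tmᵀ * Tm) = (8:ℤ) • (1 : Matrix (Fin 6) (Fin 6) ℤ) := by
  rw [A6]; unfold Tm; decide

lemma SA : (Tmᵀ * Tm) * Amat 6 = (8:ℤ) • (1 : Matrix (Fin 6) (Fin 6) ℤ) := by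
  rw [A6]; unfold Tm; decide

lemma Zc0 (x) : Zc x 0 = x 0 := by simp [Zc, Tm, mulVec, dotProduct, Fin.sum_univ_succ]
lemma Zc1 (x) : Zc x 1 = 2 * x 1 - x 0 := by
  simp [Zc, Tm, mulVec, dotProduct, Fin.sum_univ_succ]; ring
lemma Zc2 (x) : Zc x 2 = 2 * x 2 - x 0 := by
  simp [Zc, Tm, mulVec, dotProduct, Fin.sum_univ_succ]; ring
lemma Zc3 (x) : Zc x 3 = 2 * x 3 - x 0 := by
  simp [Zc, Tm, mulVec, dotProduct, Fin.sum_univ_succ]; ring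
lemma Zc4 (x) : Zc x 4 = 2 * x 4 - x 0 := by
  simp [Zc, Tm, mulVec, dotProduct, Fin.sum_univ_succ]; ring
lemma Zc5 (x) : Zc x 5 = 2 * x 5 - x 0 := by
  simp [Zc, Tm, mulVec, dotProduct, Fin.sum_univ_succ]; ring

lemma dot6 (x y : Fin 6 → ℤ) :
    x ⬝ᵥ y = x 0 * y 0 + x 1 * y 1 + x 2 * y 2 + x 3 * y 3 + x 4 * y 4 + x 5 * y 5 := by
  simp [dotProduct, Fin.sum_univ_six]

lemma Zdot (x y : Fin 6 → ℤ) : Zc x ⬝ᵥ Zc y = x ⬝ᵥ ((Tmᵀ * Tm) *ᵥ y) := by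
  unfold Zc
  rw [← mulVec_mulVec, dotProduct_mulVec x, vecMul_transpose]

lemma Ainv : (AmatQ 6)⁻¹ = (1/8 : ℚ) • (Tmᵀ * Tm).map (Int.cast) := by
  apply Matrix.inv_eq_right_inv
  have h := congrArg (fun M : Matrix (Fin 6) (Fin 6) ℤ => M.map (Int.castRingHom ℚ)) AS
  simp only [Matrix.map_mul] at h
  rw [Matrix.mul_smul]
  have e : (AmatQ 6) * (Tmᵀ * Tm).map (Int.cast : ℤ → ℚ) = (8:ℚ) • 1 := by
    refine Eq.trans ?_ (h.trans ?_)
    · rw [← Matrix.map_mul]; rfl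
    · ext i j
      rw [Matrix.map_apply, Matrix.smul_apply, Matrix.smul_apply, Matrix.one_apply, Matrix.one_apply]
      split_ifs <;> simp
  rw [e, smul_smul]; norm_num

lemma coe_iff (n : ℤ) (hn : n ≠ 0) (p q : ℤ) :
    (((p : ℚ) / n : ℚ) : AddCircle (1 : ℚ)) = (((q : ℚ) / n : ℚ) : AddCircle (1 : ℚ)) ↔ n ∣ p - q := by
  have hn' : (n : ℚ) ≠ 0 := by exact_mod_cast hn
  rw [← sub_eq_zero, ← AddCircle.coe_sub, AddCircle.coe_eq_zero_iff]
  constructor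
  · rintro ⟨k, hk⟩
    refine ⟨k, ?_⟩
    simp at hk
    field_simp at hk
    have : (p - q : ℚ) = n * k := by linarith
    exact_mod_cast this
  · rintro ⟨k, hk⟩
    refine ⟨k, ?_⟩
    have : (p - q : ℚ) = n * k := by exact_mod_cast hk
    simp
    field_simp
    linarith

lemma link_eq (x y) : linkR 6 x y = (((Zc x ⬝ᵥ Zc y : ℤ) : ℚ) / (8 : ℤ) : ℚ) := by
  unfold linkR
  congr 1
  rw [Ainv, Zdot]
  rw [smul_mulVec, dotProduct_smul]
  simp only [dotProduct, mulVec, ratVec, Matrix.map_apply]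
  push_cast
  rw [smul_eq_mul]; ring

lemma quad_eq (x) : quadR 6 x = (((Zc x ⬝ᵥ Zc x : ℤ) : ℚ) / (16 : ℤ) : ℚ) := by
  unfold quadR
  congr 1
  set N := (AmatQ 6)⁻¹ * QmatQ 6 * (AmatQ 6)⁻¹ with hN
  have hAt : ((AmatQ 6)⁻¹)ᵀ = (AmatQ 6)⁻¹ := by
    rw [Ainv]; ext i j; simp [Matrix.mul_apply, mul_comm]
  have hu : IsUnit (AmatQ 6).det := by
    have h := congrArg Matrix.det AS
    rw [det_mul, det_smul] at h
    have : (AmatQ 6).det = ((Amat 6).det : ℚ) := by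
      have := (Int.castRingHom ℚ).map_det (Amat 6)
      simpa [AmatQ] using this.symm
    rw [this, isUnit_iff_ne_zero]
    intro h0
    have h0 : (Amat 6).det = 0 := by exact_mod_cast h0
    rw [h0] at h
    simp at h
  have hs : N + Nᵀ = (AmatQ 6)⁻¹ := by
    have : Nᵀ = (AmatQ 6)⁻¹ * (QmatQ 6)ᵀ * (AmatQ 6)⁻¹ := by
      rw [hN, transpose_mul, transpose_mul, hAt, Matrix.mul_assoc]
    rw [this, hN, ← Matrix.add_mul, ← Matrix.mul_add]
    have : QmatQ 6 + (QmatQ 6)ᵀ = AmatQ 6 := by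
      ext i j; simp [QmatQ, AmatQ, Amat]
    rw [this, nonsing_inv_mul _ hu, Matrix.one_mul]
  have h1 : ratVec x ⬝ᵥ (Nᵀ *ᵥ ratVec x) = ratVec x ⬝ᵥ (N *ᵥ ratVec x) := by
    rw [mulVec_transpose, dotProduct_comm, ← dotProduct_mulVec]
  have h2 : ratVec x ⬝ᵥ ((AmatQ 6)⁻¹ *ᵥ ratVec x) = (((Zc x ⬝ᵥ Zc x : ℤ) : ℚ) / (8 : ℤ) : ℚ) := by
    rw [Ainv, Zdot]
    rw [smul_mulVec, dotProduct_smul]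
    simp only [dotProduct, mulVec, ratVec, Matrix.map_apply]
    push_cast
    rw [smul_eq_mul]; ring
  rw [← hs, add_mulVec, dotProduct_add, h1] at h2
  push_cast at h2 ⊢
  linarith

lemma link_iff (x y x' y') : linkR 6 x y = linkR 6 x' y' ↔ 8 ∣ Zc x ⬝ᵥ Zc y - Zc x' ⬝ᵥ Zc y' := by
  rw [link_eq, link_eq, coe_iff 8 (by norm_num)]

lemma quad_iff (x x') : quadR 6 x = quadR 6 x' ↔ 16 ∣ Zc x ⬝ᵥ Zc x - Zc x' ⬝ᵥ Zc x' := by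
  rw [quad_eq, quad_eq, coe_iff 16 (by norm_num)]

lemma mem_iff (x : Fin 6 → ℤ) : x ∈ LinearMap.range ((Amat 6).mulVecLin) ↔
    4 ∣ x 0 ∧ 2 ∣ x 1 ∧ 2 ∣ x 2 ∧ 2 ∣ x 3 ∧ 2 ∣ x 4 ∧ 2 ∣ x 5 ∧ 4 ∣ x 1 + x 2 + x 3 + x 4 + x 5 := by
  constructor
  · rintro ⟨y, rfl⟩
    rw [A6]
    simp [mulVecLin, mulVec, dotProduct, Fin.sum_univ_succ]
    omega
  · rintro ⟨⟨m, h0⟩, ⟨a, h1⟩, ⟨b, h2⟩, ⟨c, h3⟩, ⟨d, h4⟩, ⟨e, h5⟩, ⟨f, h6⟩⟩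
    have h7 : a + b + c + d + e = 2 * f := by omega
    refine ⟨![3 * m - f, a - m, b - m, c - m, d - m, e - m], ?_⟩
    rw [A6]
    ext i
    fin_cases i <;> simp [mulVecLin, mulVec, dotProduct, Fin.sum_univ_succ] <;> omega

lemma ck_iff (x y : Fin 6 → ℤ) : ckMk x = ckMk y ↔
    4 ∣ x 0 - y 0 ∧ 2 ∣ x 1 - y 1 ∧ 2 ∣ x 2 - y 2 ∧ 2 ∣ x 3 - y 3 ∧ 2 ∣ x 4 - y 4 ∧ 2 ∣ x 5 - y 5 ∧
    4 ∣ (x 1 - y 1) + (x 2 - y 2) + (x 3 - y 3) + (x 4 - y 4) + (x 5 - y 5) := by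
  unfold ckMk
  rw [Submodule.Quotient.eq, mem_iff]
  simp

lemma ck_surj (c : Coker 6) : ∃ x, ckMk x = c := Submodule.Quotient.mk_surjective _ c

lemma ck_add (x y : Fin 6 → ℤ) : ckMk (x + y) = ckMk x + ckMk y := rfl

/-- equality in the cokernel in terms of the doubled coordinates -/
lemma ck_of_Z (x y : Fin 6 → ℤ) (m : Fin 6 → ℤ) (h : ∀ k, Zc x k - Zc y k = 4 * m k)
    (hm : 2 ∣ m 0 + m 1 + m 2 + m 3 + m 4 + m 5) : ckMk x = ckMk y := by
  rw [ck_iff]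
  have h0 := h 0
  have h1 := h 1
  have h2 := h 2
  have h3 := h 3
  have h4 := h 4
  have h5 := h 5
  rw [Zc0, Zc0] at h0
  rw [Zc1, Zc1] at h1
  rw [Zc2, Zc2] at h2
  rw [Zc3, Zc3] at h3
  rw [Zc4, Zc4] at h4
  rw [Zc5, Zc5] at h5
  omega

lemma detA_ne : (Amat 6).det ≠ 0 := by
  have h := congrArg Matrix.det AS
  rw [det_mul, det_smul] at h
  intro h0
  rw [h0] at h
  simp at h

/-- vectors `v_k` corresponding to the unit vectors `e_k` -/
def vv (k : Fin 6) : Fin 6 → ℤ := fun j => Cm k j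

lemma Zvv (k j : Fin 6) : Zc (vv k) j = if j = k then 2 else 0 := by
  have : Zc (vv k) j = (Tm * Cmᵀ) j k := by
    simp [Zc, vv, Matrix.mul_apply, mulVec, dotProduct]
  rw [this, TC]
  simp [Matrix.one_apply]

lemma Zdot_vv (x : Fin 6 → ℤ) (k : Fin 6) : Zc x ⬝ᵥ Zc (vv k) = 2 * Zc x k := by
  simp [dotProduct, Zvv, mul_comm]

lemma Zadd (x y : Fin 6 → ℤ) (k) : Zc (x + y) k = Zc x k + Zc y k := by
  simp [Zc, mulVec_add]
lemma Zsmul (c : ℤ) (y : Fin 6 → ℤ) (k) : Zc (c • y) k = c * Zc y k := by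
  simp [Zc, mulVec_smul, -zsmul_eq_mul]

lemma Tpar (k l : Fin 6) : (2 : ℤ) ∣ Tm k l - Tm 0 l := by
  revert k l; unfold Tm; decide

lemma Zpar (x : Fin 6 → ℤ) (k : Fin 6) : (2 : ℤ) ∣ Zc x k - x 0 := by
  fin_cases k <;> simp [Zc0, Zc1, Zc2, Zc3, Zc4, Zc5] <;> omega

/-- existence of the integral isometry of `A` attached to a signed permutation -/
lemma exists_P (a : Fin 6 → Fin 6) (ha : Function.Injective a) (ε : Fin 6 → ℤ)
    (hε : ∀ i, ε i = 1 ∨ ε i = -1) :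
    ∃ P : Matrix (Fin 6) (Fin 6) ℤ, IsUnit P.det ∧ Pᵀ * Amat 6 * P = Amat 6 ∧
      ∀ u i, Zc (Pᵀ *ᵥ u) i = ε i * Zc u (a i) := by
  set G : Matrix (Fin 6) (Fin 6) ℤ := Matrix.of fun i k => if k = a i then ε i else 0 with hG
  have hGG : G * Gᵀ = 1 := by
    ext i j
    simp only [hG, Matrix.mul_apply, Matrix.transpose_apply, Matrix.of_apply]
    rw [Finset.sum_eq_single (a i)]
    · by_cases hij : i = j
      · subst hij
        rcases hε i with h | h <;> simp [h]
      · have : a i ≠ a j := fun h => hij (ha h)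
        simp [this, hij]
    · intro b _ hb
      simp [hb]
    · simp
  have hGT : ∀ i l, (G * Tm) i l = ε i * Tm (a i) l := by
    intro i l
    simp [hG, Matrix.mul_apply]
  have hdiv : ∀ i l, (2 : ℤ) ∣ (Cmᵀ * (G * Tm)) i l := by
    intro i l
    have hp : ∀ i, (2 : ℤ) ∣ (G * Tm) i l - Tm 0 l := by
      intro i
      rw [hGT]
      have := Tpar (a i) l
      rcases hε i with h | h <;> rw [h] <;> omega
    have h0 := hp 0
    have h1 := hp i
    rw [Matrix.mul_apply]
    simp only [Fin.sum_univ_six]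
    fin_cases i <;> simp [Cm] at h1 ⊢ <;> omega
  choose R hR using hdiv
  have hR' : Cmᵀ * (G * Tm) = (2 : ℤ) • (Matrix.of R) := by
    ext i l; rw [hR]; simp
  set U : Matrix (Fin 6) (Fin 6) ℤ := Matrix.of R with hU
  have hCC : Cm * Tmᵀ = (2 : ℤ) • (1 : Matrix (Fin 6) (Fin 6) ℤ) := by
    have := congrArg Matrix.transpose TC
    simpa [Matrix.transpose_mul] using this
  have hP : U * Amat 6 * Uᵀ = Amat 6 := by
    have h4 : (4 : ℤ) • (U * Amat 6 * Uᵀ) = (4 : ℤ) • Amat 6 := by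
      have e1 : (4 : ℤ) • (U * Amat 6 * Uᵀ) = ((2 : ℤ) • U) * Amat 6 * ((2 : ℤ) • U)ᵀ := by
        simp [smul_smul, -zsmul_eq_mul]
      rw [e1, ← hR', A_eq]
      have : Cmᵀ * (G * Tm) * ((2:ℤ) • (Cmᵀ * Cm)) * (Cmᵀ * (G * Tm))ᵀ
        = (2:ℤ) • (Cmᵀ * G * (Tm * Cmᵀ) * (Cm * Tmᵀ) * Gᵀ * Cm) := by
        simp [Matrix.transpose_mul, Matrix.mul_assoc, -zsmul_eq_mul]
      rw [this, TC, hCC]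
      simp only [Matrix.mul_smul, Matrix.smul_mul, Matrix.mul_one, smul_smul]
      rw [Matrix.mul_assoc Cmᵀ, hGG, Matrix.mul_one]
      norm_num
    exact smul_right_injective _ (by norm_num : (4:ℤ) ≠ 0) h4
  refine ⟨Uᵀ, ?_, ?_, ?_⟩
  · have h := congrArg Matrix.det hP
    rw [det_mul, det_mul, det_transpose] at h
    have h1 : U.det * U.det = 1 := by
      have : (Amat 6).det * (U.det * U.det) = (Amat 6).det * 1 := by linarith
      exact mul_left_cancel₀ detA_ne this
    rw [det_transpose]
    exact IsUnit.of_mul_eq_one _ h1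
  · simpa using hP
  · intro u i
    rw [transpose_transpose]
    have hTU : Tm * U = G * Tm := by
      have h2 : (2:ℤ) • (Tm * U) = (2:ℤ) • (G * Tm) := by
        rw [← Matrix.mul_smul, ← hR', ← Matrix.mul_assoc, TC]; simp
      exact smul_right_injective _ (by norm_num : (2:ℤ) ≠ 0) h2
    unfold Zc
    rw [mulVec_mulVec, hTU]
    simp only [mulVec, dotProduct, hGT, Finset.mul_sum, mul_assoc]

/-- an isometry matching a signed permutation on the frame lies in the image -/
lemma inImage_of_signed (φ : Coker 6 ≃+ Coker 6) (hφ : PreservesBoundaryForms 6 φ)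
    (a : Fin 6 → Fin 6) (ha : Function.Injective a) (ε : Fin 6 → ℤ)
    (hε : ∀ i, ε i = 1 ∨ ε i = -1) (hv : ∀ i, φ (ckMk (vv i)) = ckMk (ε i • vv (a i))) :
    InBoundaryImage 6 φ := by
  obtain ⟨P, hu, hPA, hZ⟩ := exists_P a ha ε hε
  refine ⟨P, hu, hPA, ?_⟩
  have hut : IsUnit Pᵀ.det := by rwa [det_transpose]
  have hsurj : Function.Surjective a := Finite.injective_iff_surjective.mp ha
  have hodd : ∀ x : Fin 6 → ℤ, ¬ (2:ℤ) ∣ x 0 → φ (ckMk x) = ckMk ((Pᵀ)⁻¹ *ᵥ x) := by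
    intro x hx
    set u := (Pᵀ)⁻¹ *ᵥ x with hudef
    have hxu : Pᵀ *ᵥ u = x := by
      rw [hudef, mulVec_mulVec, mul_nonsing_inv _ hut, one_mulVec]
    obtain ⟨w, hw⟩ := ck_surj (φ (ckMk x))
    have hZx : ∀ i, Zc x i = ε i * Zc u (a i) := by rw [← hxu]; exact hZ u
    have h1 : ∀ k, (4:ℤ) ∣ Zc w k - Zc u k := by
      intro k
      obtain ⟨i, rfl⟩ := hsurj k
      have := (link_iff _ _ _ _).1 (hφ.1 x (vv i) w (ε i • vv (a i)) hw (hv i).symm)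
      have e : Zc (ε i • vv (a i)) = ε i • Zc (vv (a i)) := by
        simp [Zc, mulVec_smul, -zsmul_eq_mul]
      rw [e, dotProduct_smul, Zdot_vv, Zdot_vv, hZx, smul_eq_mul] at this
      rcases hε i with h | h <;> rw [h] at this <;> omega
    choose m hm using h1
    have h2 := (quad_iff _ _).1 (hφ.2 x w hw)
    have hnorm : Zc x ⬝ᵥ Zc x = Zc u ⬝ᵥ Zc u := by
      simp only [dotProduct]
      rw [← (Equiv.ofBijective a ⟨ha, hsurj⟩).sum_comp (fun k => Zc u k * Zc u k)]
      refine Finset.sum_congr rfl fun i _ => ?_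
      change _ = Zc u (a i) * Zc u (a i)
      rw [hZx]
      rcases hε i with h | h <;> simp [h]
    rw [hnorm] at h2
    have hoddu : ∀ k, ∃ n, Zc u k = 2 * n + 1 := by
      intro k
      have p1 := Zpar x 0
      have p2 := Zpar u (a 0)
      have p3 := Zpar u k
      have p4 := hZx 0
      rw [Zc0] at p1 p4
      refine ⟨(Zc u k) / 2, ?_⟩
      rcases hε 0 with h | h <;> rw [h] at p4 <;> omega
    choose n hn using hoddu
    rw [← hw]
    apply ck_of_Z w u m hm
    have hwm : ∀ k, Zc w k = 2 * n k + 1 + 4 * m k := by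
      intro k; have := hm k; have := hn k; omega
    rw [dot6, dot6] at h2
    simp only [hwm, hn] at h2
    obtain ⟨c, hc⟩ := h2
    refine ⟨c - (n 0 * m 0 + n 1 * m 1 + n 2 * m 2 + n 3 * m 3 + n 4 * m 4 + n 5 * m 5)
      - (m 0 ^ 2 + m 1 ^ 2 + m 2 ^ 2 + m 3 ^ 2 + m 4 ^ 2 + m 5 ^ 2), ?_⟩
    linarith
  intro x
  by_cases hx : (2:ℤ) ∣ x 0
  · have hs : ¬ (2:ℤ) ∣ (Pi.single 0 1 : Fin 6 → ℤ) 0 := by simp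
    have hxs : ¬ (2:ℤ) ∣ (x + (Pi.single 0 1 : Fin 6 → ℤ)) 0 := by simp; omega
    have e1 := hodd _ hs
    have e2 := hodd _ hxs
    rw [mulVec_add, ck_add, ck_add, map_add, e1] at e2
    exact add_right_cancel e2
  · exact hodd x hx

lemma parity_class (p : Fin 6 → Fin 2)
    (h : ((p 0 : ℕ) + p 1 + p 2 + p 3 + p 4 + p 5) % 4 = 1) :
    ∃ a : Fin 6, ∃ c : Fin 2, ∀ k, p k = c + if k = a then 1 else 0 := by
  revert p; decide

lemma class4 (x : Fin 6 → ℤ) (h : 16 ∣ Zc x ⬝ᵥ Zc x - 4) :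
    ∃ z : Fin 6 → ℤ, (∀ k, Zc x k = 2 * z k) ∧ ∃ a : Fin 6, ∃ c : ℤ, (c = 0 ∨ c = 1) ∧
      ∀ k, 2 ∣ z k - (c + if k = a then 1 else 0) := by
  by_cases hx : (2:ℤ) ∣ x 0
  · have hz : ∀ k, (2:ℤ) ∣ Zc x k := fun k => by have := Zpar x k; omega
    choose z hz using hz
    refine ⟨z, hz, ?_⟩
    have hq : ∀ k, ∃ q : ℤ, ∃ p : Fin 2, z k = 2 * q + (p : ℕ) := by
      intro k
      rcases Int.even_or_odd' (z k) with ⟨q, hq | hq⟩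
      · exact ⟨q, 0, by simpa using hq⟩
      · exact ⟨q, 1, by simpa using hq⟩
    choose q p hq using hq
    have hsq : ∀ k, z k * z k = 4 * (q k * q k + q k * (p k : ℕ)) + (p k : ℕ) := by
      intro k
      rw [hq]
      have : ((p k : ℕ) : ℤ) * (p k : ℕ) = (p k : ℕ) := by
        generalize p k = r
        fin_cases r <;> simp
      linear_combination this
    have hs : ((p 0 : ℕ) + p 1 + p 2 + p 3 + p 4 + p 5) % 4 = 1 := by
      rw [dot6] at h
      simp only [hz] at h
      have e : ∀ k, 2 * z k * (2 * z k) = 4 * (4 * (q k * q k + q k * (p k : ℕ)) + (p k : ℕ)) := by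
        intro k; rw [← hsq]; ring
      simp only [e] at h
      omega
    obtain ⟨a, c, hac⟩ := parity_class p hs
    refine ⟨a, (c : ℕ), ?_, ?_⟩
    · fin_cases c <;> simp
    · intro k
      rw [hq, hac k]
      by_cases hk : k = a
      · fin_cases c <;> simp [hk]
      · simp [hk]
  · exfalso
    have hz : ∀ k, ∃ n, Zc x k = 2 * n + 1 := fun k => by
      have := Zpar x k
      exact ⟨Zc x k / 2, by omega⟩
    choose n hn using hz
    rw [dot6] at h
    simp only [hn] at h
    have e : ∀ k, (2 * n k + 1) * (2 * n k + 1) = 4 * (n k * n k + n k) + 1 := by intro k; ring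
    simp only [e] at h
    omega

lemma pair_class (a a' : Fin 6) (c c' : ℤ) (hc : c = 0 ∨ c = 1) (hc' : c' = 0 ∨ c' = 1)
    (h : (2:ℤ) ∣ ∑ k, (c + if k = a then 1 else 0) * (c' + if k = a' then 1 else 0)) :
    (c = c' → a ≠ a') ∧ (c ≠ c' → a = a') := by
  rcases hc with rfl | rfl <;> rcases hc' with rfl | rfl <;> revert a a' <;> decide

lemma frame (φ : Coker 6 ≃+ Coker 6) (hφ : PreservesBoundaryForms 6 φ) :
    ∃ (w z : Fin 6 → Fin 6 → ℤ) (a : Fin 6 → Fin 6) (c : ℤ),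
      (∀ i, ckMk (w i) = φ (ckMk (vv i))) ∧ (∀ i k, Zc (w i) k = 2 * z i k) ∧
      Function.Injective a ∧ (c = 0 ∨ c = 1) ∧
      ∀ i k, 2 ∣ z i k - (c + if k = a i then 1 else 0) := by
  have hw : ∀ i, ∃ w, ckMk w = φ (ckMk (vv i)) := fun i => ck_surj _
  choose w hw using hw
  have hcl : ∀ i, 16 ∣ Zc (w i) ⬝ᵥ Zc (w i) - 4 := by
    intro i
    have := (quad_iff _ _).1 (hφ.2 _ _ (hw i))
    rw [Zdot_vv, Zvv] at this
    simpa using this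
  have := fun i => class4 (w i) (hcl i)
  choose z hz a c hc hzc using this
  have hpair : ∀ i j, i ≠ j → (c i = c j → a i ≠ a j) ∧ (c i ≠ c j → a i = a j) := by
    intro i j hij
    apply pair_class _ _ _ _ (hc i) (hc j)
    have h1 := (link_iff _ _ _ _).1 (hφ.1 _ _ _ _ (hw i) (hw j))
    rw [Zdot_vv, Zvv, if_neg (Ne.symm hij)] at h1
    have h2 : Zc (w i) ⬝ᵥ Zc (w j) = 4 * ∑ k, z i k * z j k := by
      simp only [dotProduct, hz, Finset.mul_sum]
      refine Finset.sum_congr rfl fun k _ => by ring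
    have h3 : (2:ℤ) ∣ ∑ k, (z i k * z j k -
        (c i + if k = a i then 1 else 0) * (c j + if k = a j then 1 else 0)) := by
      apply Finset.dvd_sum
      intro k _
      obtain ⟨r, hr⟩ := hzc i k
      obtain ⟨s, hs⟩ := hzc j k
      exact ⟨r * z j k + (c i + if k = a i then 1 else 0) * s, by
        linear_combination (z j k) * hr + (c i + if k = a i then 1 else 0) * hs⟩
    rw [Finset.sum_sub_distrib] at h3
    rw [h2] at h1
    omega
  have hcc : ∀ i, c i = c 0 := by
    intro i
    by_contra hne
    have hi0 : i ≠ 0 := fun h => hne (by rw [h])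
    obtain ⟨j, hj0, hji⟩ : ∃ j : Fin 6, j ≠ 0 ∧ j ≠ i := by
      have : ∀ i : Fin 6, ∃ j : Fin 6, j ≠ 0 ∧ j ≠ i := by decide
      exact this i
    have e := (hpair i 0 hi0).2 hne
    by_cases hj : c j = c 0
    · have e1 := (hpair j 0 hj0).1 hj
      have e2 := (hpair j i hji).2 (fun h => hne (h.symm.trans hj))
      exact e1 (e2.trans e)
    · have e1 := (hpair j 0 hj0).2 hj
      have hij : c j = c i := by
        rcases hc i with h | h <;> rcases hc j with h' | h' <;> rcases hc 0 with h'' | h'' <;>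
          omega
      exact (hpair j i hji).1 hij (e1.trans e.symm)
  refine ⟨w, z, a, c 0, hw, hz, ?_, hc 0, ?_⟩
  · intro i j hij
    by_contra hne
    exact (hpair i j hne).1 ((hcc i).trans (hcc j).symm) hij
  · intro i k
    rw [← hcc i]; exact hzc i k

lemma sum_delta (a : Fin 6) : ((if (0 : Fin 6) = a then 1 else 0) + (if (1 : Fin 6) = a then 1 else 0)
    + (if (2 : Fin 6) = a then 1 else 0) + (if (3 : Fin 6) = a then 1 else 0)
    + (if (4 : Fin 6) = a then 1 else 0) + (if (5 : Fin 6) = a then 1 else 0) : ℤ) = 1 := by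
  revert a; decide

lemma inImage_of_frame (φ : Coker 6 ≃+ Coker 6) (hφ : PreservesBoundaryForms 6 φ)
    (w z : Fin 6 → Fin 6 → ℤ) (a : Fin 6 → Fin 6)
    (hw : ∀ i, ckMk (w i) = φ (ckMk (vv i))) (hz : ∀ i k, Zc (w i) k = 2 * z i k)
    (ha : Function.Injective a) (hzc : ∀ i k, 2 ∣ z i k - (if k = a i then 1 else 0)) :
    InBoundaryImage 6 φ := by
  have : ∀ i, ∃ ε : ℤ, (ε = 1 ∨ ε = -1) ∧ ckMk (w i) = ckMk (ε • vv (a i)) := by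
    intro i
    choose r hr using hzc i
    have hsum := sum_delta (a i)
    by_cases hs : (2:ℤ) ∣ r 0 + r 1 + r 2 + r 3 + r 4 + r 5
    · refine ⟨1, Or.inl rfl, ck_of_Z _ _ r ?_ hs⟩
      intro k
      rw [Zsmul, Zvv, hz]
      have := hr k
      split_ifs at this ⊢ <;> linarith
    · refine ⟨-1, Or.inr rfl, ck_of_Z _ _ (fun k => r k + if k = a i then 1 else 0) ?_ ?_⟩
      · intro k
        rw [Zsmul, Zvv, hz]
        have := hr k
        split_ifs at this ⊢ <;> linarith
      · omega
  choose ε hε hv using this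
  exact inImage_of_signed φ hφ a ha ε hε (fun i => (hw i).symm.trans (hv i))

/-- `z ↦ (∑ z) • 1 - z` -/
def tv (x : Fin 6 → ℤ) : ℤ := x 1 + x 2 + x 3 + x 4 + x 5 - 2 * x 0

def Ml : (Fin 6 → ℤ) →ₗ[ℤ] (Fin 6 → ℤ) where
  toFun x := fun j => 2 * tv x - x j
  map_add' x y := by ext j; simp [tv]; ring
  map_smul' c x := by ext j; simp [tv]; ring

lemma Ml_apply (x j) : Ml x j = 2 * tv x - x j := rfl

lemma Z_Ml (x : Fin 6 → ℤ) (k : Fin 6) : Zc (Ml x) k = 2 * tv x - Zc x k := by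
  fin_cases k <;> simp [Zc0, Zc1, Zc2, Zc3, Zc4, Zc5, Ml_apply] <;> ring

lemma Z_sum (x : Fin 6 → ℤ) : Zc x 0 + Zc x 1 + Zc x 2 + Zc x 3 + Zc x 4 + Zc x 5 = 2 * tv x := by
  rw [Zc0, Zc1, Zc2, Zc3, Zc4, Zc5, tv]; ring

lemma Zdot_Ml (x y : Fin 6 → ℤ) :
    Zc (Ml x) ⬝ᵥ Zc (Ml y) = 16 * (tv x * tv y) + Zc x ⬝ᵥ Zc y := by
  rw [dot6, dot6]
  simp only [Z_Ml]
  linear_combination (-2 * tv x) * Z_sum y + (- 2 * tv y) * Z_sum x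

def tauHom : Coker 6 →ₗ[ℤ] Coker 6 :=
  Submodule.mapQ _ _ Ml (by
    intro x hx
    rw [Submodule.mem_comap, mem_iff]
    rw [mem_iff] at hx
    simp only [Ml_apply, tv]
    omega)

lemma tauHom_mk (x : Fin 6 → ℤ) : tauHom (ckMk x) = ckMk (Ml x) := rfl

lemma tauHom_invol (c : Coker 6) : tauHom (tauHom c) = c := by
  obtain ⟨x, rfl⟩ := ck_surj c
  rw [tauHom_mk, tauHom_mk, ck_iff]
  simp only [Ml_apply, tv]
  omega

def tau : Coker 6 ≃+ Coker 6 where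
  toFun := tauHom
  invFun := tauHom
  left_inv := tauHom_invol
  right_inv := tauHom_invol
  map_add' := map_add _

lemma tau_mk (x : Fin 6 → ℤ) : tau (ckMk x) = ckMk (Ml x) := rfl

lemma tau_tau (c : Coker 6) : tau (tau c) = c := tauHom_invol c

/-- the forms only depend on the class -/
lemma Z_congr (x y : Fin 6 → ℤ) (h : ckMk x = ckMk y) :
    ∃ m : Fin 6 → ℤ, (∀ k, Zc x k = Zc y k + 4 * m k) ∧
      2 ∣ m 0 + m 1 + m 2 + m 3 + m 4 + m 5 := by
  rw [ck_iff] at h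
  obtain ⟨⟨m, h0⟩, ⟨a, h1⟩, ⟨b, h2⟩, ⟨c, h3⟩, ⟨d, h4⟩, ⟨e, h5⟩, ⟨f, h6⟩⟩ := h
  refine ⟨![m, a - m, b - m, c - m, d - m, e - m], ?_, ?_⟩
  · intro k
    fin_cases k <;> simp [Zc0, Zc1, Zc2, Zc3, Zc4, Zc5] <;> omega
  · simp
    omega

lemma pres_one : PreservesBoundaryForms 6 (AddEquiv.refl _) := by
  have key : ∀ x y, ckMk x = ckMk y → ∀ u : Fin 6 → ℤ, (8:ℤ) ∣ Zc x ⬝ᵥ Zc u - Zc y ⬝ᵥ Zc u := by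
    intro x y h u
    obtain ⟨m, hm, ⟨s, hs⟩⟩ := Z_congr x y h
    have hu : ∀ k, ∃ r, Zc u k = u 0 + 2 * r := fun k => by
      obtain ⟨r, hr⟩ := Zpar u k; exact ⟨r, by omega⟩
    choose r hr using hu
    rw [dot6, dot6]
    simp only [hm, hr]
    refine ⟨u 0 * s + (m 0 * r 0 + m 1 * r 1 + m 2 * r 2 + m 3 * r 3 + m 4 * r 4 + m 5 * r 5), ?_⟩
    linear_combination 4 * u 0 * hs
  refine ⟨?_, ?_⟩
  · intro x y x' y' hx hy
    rw [link_iff]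
    have h1 := key x' x hx y'
    have h2 := key y' y hy x
    rw [dotProduct_comm, dotProduct_comm (Zc y)] at h2
    omega
  · intro x x' hx
    rw [quad_iff]
    obtain ⟨m, hm, ⟨s, hs⟩⟩ := Z_congr x' x hx
    have hu : ∀ k, ∃ r, Zc x k = x 0 + 2 * r := fun k => by
      obtain ⟨r, hr⟩ := Zpar x k; exact ⟨r, by omega⟩
    choose r hr using hu
    rw [dot6, dot6]
    simp only [hm, hr]
    refine ⟨x 0 * s + (m 0 * r 0 + m 1 * r 1 + m 2 * r 2 + m 3 * r 3 + m 4 * r 4 + m 5 * r 5)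
      + (m 0 ^ 2 + m 1 ^ 2 + m 2 ^ 2 + m 3 ^ 2 + m 4 ^ 2 + m 5 ^ 2), ?_⟩
    linear_combination 8 * x 0 * hs

lemma pres_trans (φ ψ : Coker 6 ≃+ Coker 6) (hφ : PreservesBoundaryForms 6 φ)
    (hψ : PreservesBoundaryForms 6 ψ) : PreservesBoundaryForms 6 (φ.trans ψ) := by
  refine ⟨?_, ?_⟩
  · intro x y x' y' hx hy
    obtain ⟨u, hu⟩ := ck_surj (φ (ckMk x))
    obtain ⟨v, hv⟩ := ck_surj (φ (ckMk y))
    rw [AddEquiv.trans_apply, ← hu] at hx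
    rw [AddEquiv.trans_apply, ← hv] at hy
    exact (hψ.1 _ _ _ _ hx hy).trans (hφ.1 _ _ _ _ hu hv)
  · intro x x' hx
    obtain ⟨u, hu⟩ := ck_surj (φ (ckMk x))
    rw [AddEquiv.trans_apply, ← hu] at hx
    exact (hψ.2 _ _ hx).trans (hφ.2 _ _ hu)

lemma pres_tau : PreservesBoundaryForms 6 tau := by
  refine ⟨?_, ?_⟩
  · intro x y x' y' hx hy
    rw [tau_mk] at hx hy
    rw [pres_one.1 _ _ x' y' hx hy, link_iff, Zdot_Ml]
    omega
  · intro x x' hx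
    rw [tau_mk] at hx
    rw [pres_one.2 _ x' hx, quad_iff, Zdot_Ml]
    omega

lemma dichotomy (φ : Coker 6 ≃+ Coker 6) (hφ : PreservesBoundaryForms 6 φ) :
    InBoundaryImage 6 φ ∨ InBoundaryImage 6 (φ.trans tau) := by
  obtain ⟨w, z, a, c, hw, hz, ha, hc, hzc⟩ := frame φ hφ
  rcases hc with rfl | rfl
  · left
    exact inImage_of_frame φ hφ w z a hw hz ha (by simpa using hzc)
  · right
    refine inImage_of_frame _ (pres_trans _ _ hφ pres_tau) (fun i => Ml (w i))
      (fun i k => tv (w i) - z i k) a ?_ ?_ ha ?_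
    · intro i
      rw [AddEquiv.trans_apply, ← hw i, tau_mk]
    · intro i k
      rw [Z_Ml, hz]; ring
    · intro i k
      have hs := Z_sum (w i)
      simp only [hz] at hs
      have h0 := hzc i 0
      have h1 := hzc i 1
      have h2 := hzc i 2
      have h3 := hzc i 3
      have h4 := hzc i 4
      have h5 := hzc i 5
      have hk := hzc i k
      have hd := sum_delta (a i)
      omega

lemma image_norm (φ : Coker 6 ≃+ Coker 6) (h : InBoundaryImage 6 φ) :
    ∃ w, φ (ckMk (vv 0)) = ckMk w ∧ Zc w ⬝ᵥ Zc w = 4 := by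
  obtain ⟨P, hu, hPA, hx⟩ := h
  refine ⟨_, hx (vv 0), ?_⟩
  have hut : IsUnit Pᵀ.det := by rwa [det_transpose]
  set u := (Pᵀ)⁻¹ *ᵥ vv 0 with hudef
  have hxu : Pᵀ *ᵥ u = vv 0 := by
    rw [hudef, mulVec_mulVec, mul_nonsing_inv _ hut, one_mulVec]
  have hS : P * (Tmᵀ * Tm) * Pᵀ = Tmᵀ * Tm := by
    set S := Tmᵀ * Tm with hSdef
    have h1 : S * Pᵀ * Amat 6 * P = (8:ℤ) • 1 := by
      rw [Matrix.mul_assoc S, Matrix.mul_assoc S, hPA, SA]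
    have h2 : P * (S * Pᵀ * Amat 6) = (8:ℤ) • 1 := by
      have e : S * Pᵀ * Amat 6 = (8:ℤ) • P⁻¹ := by
        have := congrArg (· * P⁻¹) h1
        simp only [Matrix.mul_assoc, mul_nonsing_inv _ hu, Matrix.mul_one, Matrix.smul_mul,
          Matrix.one_mul] at this
        simpa only [Matrix.mul_assoc] using this
      rw [e, Matrix.mul_smul, mul_nonsing_inv _ hu]
    have h3 : (8:ℤ) • (P * S * Pᵀ) = (8:ℤ) • S := by
      have e : P * (S * Pᵀ * Amat 6) * S = (8:ℤ) • (P * S * Pᵀ) := by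
        have : P * (S * Pᵀ * Amat 6) * S = P * S * Pᵀ * (Amat 6 * S) := by
          simp only [Matrix.mul_assoc]
        rw [this, AS, Matrix.mul_smul, Matrix.mul_one]
      rw [← e, h2, Matrix.smul_mul, Matrix.one_mul]
    exact smul_right_injective _ (by norm_num : (8:ℤ) ≠ 0) h3
  have h4 : Zc (vv 0) ⬝ᵥ Zc (vv 0) = 4 := by
    rw [Zdot_vv, Zvv]; norm_num
  rw [← h4, ← hxu, Zdot, Zdot]
  conv_lhs => rw [← hS]
  rw [← mulVec_mulVec, ← mulVec_mulVec, dotProduct_mulVec u P, ← mulVec_transpose]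

lemma odd_sq (n r : ℤ) (h : n = 2 * r + 1) : 1 ≤ n * n := by
  have : 0 < n * n := by
    apply mul_self_pos.2; omega
  omega

lemma not_both (φ : Coker 6 ≃+ Coker 6) (h : InBoundaryImage 6 φ) :
    ¬ InBoundaryImage 6 (φ.trans tau) := by
  intro h'
  obtain ⟨w, hw, hn⟩ := image_norm _ h
  obtain ⟨w', hw', hn'⟩ := image_norm _ h'
  rw [AddEquiv.trans_apply, hw, tau_mk] at hw'
  obtain ⟨z, hz, a, c, hc, hzc⟩ := class4 w (by rw [hn]; norm_num)
  obtain ⟨z', hz', a', c', hc', hzc'⟩ := class4 w' (by rw [hn']; norm_num)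
  obtain ⟨m, hm, -⟩ := Z_congr _ _ hw'
  have small : ∀ (z : Fin 6 → ℤ) (a : Fin 6) (w : Fin 6 → ℤ), (∀ k, Zc w k = 2 * z k) →
      Zc w ⬝ᵥ Zc w = 4 → (∀ k, 2 ∣ z k - (1 + if k = a then 1 else 0)) → False := by
    intro z a w hz hn h
    rw [dot6] at hn
    simp only [hz] at hn
    have hb : ∀ k, (1:ℤ) - (if k = a then 1 else 0) ≤ z k * z k := by
      intro k
      obtain ⟨r, hr⟩ := h k
      split_ifs at hr ⊢
      · have := mul_self_nonneg (z k); omega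
      · have := odd_sq (z k) r (by omega); omega
    have h0 := hb 0
    have h1 := hb 1
    have h2 := hb 2
    have h3 := hb 3
    have h4 := hb 4
    have h5 := hb 5
    have hd := sum_delta a
    linarith
  have hc0 : c = 0 := by
    rcases hc with h | h
    · exact h
    · subst h; exact (small z a w hz hn hzc).elim
  have hc0' : c' = 0 := by
    rcases hc' with h | h
    · exact h
    · subst h; exact (small z' a' w' hz' hn' hzc').elim
  subst hc0 hc0'
  have hs := Z_sum w
  simp only [hz] at hs
  have hrel : ∀ k, (2:ℤ) ∣ 1 - (if k = a then 1 else 0) - (if k = a' then 1 else 0) := by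
    intro k
    have h0 := hzc 0
    have h1 := hzc 1
    have h2 := hzc 2
    have h3 := hzc 3
    have h4 := hzc 4
    have h5 := hzc 5
    have hd := sum_delta a
    have hk := hzc k
    have hk' := hzc' k
    have e := hm k
    rw [Z_Ml, hz, hz'] at e
    omega
  have fin : ∀ a a' : Fin 6,
      ¬ ∀ k : Fin 6, (2:ℤ) ∣ 1 - (if k = a then 1 else 0) - (if k = a' then 1 else 0) := by decide
  exact fin a a' hrel

lemma trans_tau_tau (φ : Coker 6 ≃+ Coker 6) : (φ.trans tau).trans tau = φ := by
  ext c
  simp [tau_tau]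

/-- For h = 6, the image of the boundary map ∂ has index 2 in the group of all
automorphisms of the boundary forms; in particular ∂ is not surjective. -/
theorem boundary_map_index_h6 :
    Nat.card {φ : Coker 6 ≃+ Coker 6 // PreservesBoundaryForms 6 φ} =
      2 * Nat.card {φ : Coker 6 ≃+ Coker 6 //
        PreservesBoundaryForms 6 φ ∧ InBoundaryImage 6 φ} ∧
    ∃ φ : Coker 6 ≃+ Coker 6, PreservesBoundaryForms 6 φ ∧ ¬ InBoundaryImage 6 φ := by
  constructor
  · let f : Bool × {φ : Coker 6 ≃+ Coker 6 // PreservesBoundaryForms 6 φ ∧ InBoundaryImage 6 φ} →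
        {φ : Coker 6 ≃+ Coker 6 // PreservesBoundaryForms 6 φ} := fun p =>
      match p with
      | (true, φ) => ⟨φ.1, φ.2.1⟩
      | (false, φ) => ⟨φ.1.trans tau, pres_trans _ _ φ.2.1 pres_tau⟩
    have hf : Function.Bijective f := by
      constructor
      · rintro ⟨b, φ, hφ⟩ ⟨b', ψ, hψ⟩ h
        have h := congrArg Subtype.val h
        cases b <;> cases b' <;> simp only [f] at h
        · have h2 := congrArg (fun χ : Coker 6 ≃+ Coker 6 => χ.trans tau) h
          simp only [trans_tau_tau] at h2
          subst h2; rfl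
        · subst h
          exact (not_both _ hφ.2 hψ.2).elim
        · subst h
          exact (not_both _ hψ.2 hφ.2).elim
        · subst h; rfl
      · rintro ⟨φ, hφ⟩
        rcases dichotomy φ hφ with h | h
        · exact ⟨(true, ⟨φ, hφ, h⟩), rfl⟩
        · exact ⟨(false, ⟨φ.trans tau, pres_trans _ _ hφ pres_tau, h⟩),
            Subtype.ext (trans_tau_tau φ)⟩
    rw [← Nat.card_congr (Equiv.ofBijective f hf), Nat.card_prod]
    simp
  · by_cases h : InBoundaryImage 6 tau
    · refine ⟨tau.trans tau, pres_trans _ _ pres_tau pres_tau, not_both _ h⟩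
    · exact ⟨tau, pres_tau, h⟩
end
end

section
/- For h = 7, the image of the boundary map ∂ is a subgroup of index 8 in the group of all group automorphisms φ of ℤ⁷/A₇ℤ⁷ satisfying ∂λ(φ(ξ),φ(η)) = ∂λ(ξ,η) and ∂θ(φ(ξ)) = ∂θ(ξ) for all ξ, η; in particular ∂ is not surjective, so there exists an automorphism of the boundary forms that is not of the form [x] ↦ [(P^T)^{-1}x] for any P ∈ GL₇(ℤ) with P^T A₇ P = A₇. -/
open Matrix

noncomputable section

namespace BM

def uM : Matrix (Fin 7) (Fin 7) ℤ :=
  Matrix.of fun i j => if j = 0 then -1 else if i = j then 2 else 0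
def mM : Matrix (Fin 7) (Fin 7) ℤ :=
  Matrix.of fun i j => if i = 0 then (if j = 0 then -2 else 0)
    else if j = 0 then -1 else if i = j then 1 else 0

lemma mu : mM * uM = (2:ℤ) • 1 := by decide +kernel
lemma um : uM * mM = (2:ℤ) • 1 := by decide +kernel
lemma amm : Amat 7 = (2:ℤ) • (mM * mMᵀ) := by unfold Amat Qmat; decide +kernel
lemma ag : Amat 7 * (uMᵀ * uM) = (8:ℤ) • 1 := by unfold Amat Qmat; decide +kernel
lemma ga : (uMᵀ * uM) * Amat 7 = (8:ℤ) • 1 := by unfold Amat Qmat; decide +kernel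
lemma ua : uM * Amat 7 = (4:ℤ) • mMᵀ := by unfold Amat Qmat; decide +kernel

def uv (x : Fin 7 → ℤ) : Fin 7 → ℤ := uM *ᵥ x

lemma uv_apply (x : Fin 7 → ℤ) (i : Fin 7) :
    uv x i = if i = 0 then - x 0 else 2 * x i - x 0 := by
  fin_cases i <;> simp [uv, uM, Matrix.mulVec, dotProduct, Fin.sum_univ_seven] <;> ring

lemma uv_sub (x y : Fin 7 → ℤ) : uv (x - y) = uv x - uv y := Matrix.mulVec_sub _ _ _
lemma uv_add (x y : Fin 7 → ℤ) : uv (x + y) = uv x + uv y := Matrix.mulVec_add _ _ _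

def gg (x y : Fin 7 → ℤ) : ℤ := uv x ⬝ᵥ uv y

lemma gg_eq (x y) : gg x y = x ⬝ᵥ ((uMᵀ * uM) *ᵥ y) := by
  simp only [gg, uv]
  rw [← Matrix.mulVec_mulVec, Matrix.dotProduct_mulVec x, Matrix.vecMul_transpose]

lemma ckMk_eq (x y : Fin 7 → ℤ) : ckMk x = ckMk y ↔ ∃ w, x = y + Amat 7 *ᵥ w := by
  unfold ckMk
  rw [Submodule.Quotient.eq, LinearMap.mem_range]
  constructor
  · rintro ⟨w, hw⟩
    exact ⟨w, by rw [Matrix.mulVecLin_apply] at hw; rw [hw]; abel⟩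
  · rintro ⟨w, hw⟩
    exact ⟨w, by rw [Matrix.mulVecLin_apply, hw]; abel⟩

lemma uv_A (w : Fin 7 → ℤ) : uv (Amat 7 *ᵥ w) = (4:ℤ) • (mMᵀ *ᵥ w) := by
  unfold uv; rw [Matrix.mulVec_mulVec, ua, Matrix.smul_mulVec]

lemma ckMk_of_uv (x y : Fin 7 → ℤ) (c : Fin 7 → ℤ) (h : ∀ i, uv x i - uv y i = 4 * c i)
    (hs : Even (∑ i, c i)) : ckMk x = ckMk y := by
  rw [ckMk_eq]
  obtain ⟨s, hs⟩ := hs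
  refine ⟨fun i => if i = 0 then - s else c i, ?_⟩
  have key : (8:ℤ) • (x - y) = (8:ℤ) • (Amat 7 *ᵥ (fun i => if i = 0 then - s else c i)) := by
    have h1 : (8:ℤ) • (x - y) = Amat 7 *ᵥ (uMᵀ *ᵥ uv (x - y)) := by
      unfold uv
      rw [Matrix.mulVec_mulVec, Matrix.mulVec_mulVec, Matrix.mul_assoc, ag, Matrix.smul_mulVec,
        Matrix.one_mulVec]
    have h2 : uMᵀ *ᵥ uv (x - y) = (8:ℤ) • (fun i => if i = 0 then - s else c i) := by
      have h3 : uv (x - y) = fun i => 4 * c i := by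
        rw [uv_sub]; funext i; exact h i
      rw [h3]
      rw [Fin.sum_univ_seven] at hs
      funext i
      fin_cases i <;> simp [uM, Matrix.mulVec, dotProduct, Fin.sum_univ_seven] <;> linarith
    rw [h1, h2, Matrix.mulVec_smul]
  have := smul_right_injective (Fin 7 → ℤ) (by norm_num : (8:ℤ) ≠ 0) key
  rw [← this]; abel

lemma gg_comm (x y) : gg x y = gg y x := dotProduct_comm _ _
lemma gg_add_left (x y z) : gg (x + y) z = gg x z + gg y z := by
  unfold gg; rw [uv_add, add_dotProduct]
lemma gg_add_right (x y z) : gg z (x + y) = gg z x + gg z y := by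
  unfold gg; rw [uv_add, dotProduct_add]

lemma gg_A (x w) : gg x (Amat 7 *ᵥ w) = 8 * (x ⬝ᵥ w) := by
  rw [gg_eq, Matrix.mulVec_mulVec, ga, Matrix.smul_mulVec, Matrix.one_mulVec, dotProduct_smul,
    smul_eq_mul]

lemma gg_congr {x x' y y'} (h : ckMk x = ckMk x') (h' : ckMk y = ckMk y') :
    (8:ℤ) ∣ gg x y - gg x' y' := by
  obtain ⟨w, rfl⟩ := (ckMk_eq _ _).1 h
  obtain ⟨v, rfl⟩ := (ckMk_eq _ _).1 h'
  rw [gg_add_left, gg_add_right, gg_A, gg_comm (Amat 7 *ᵥ w), gg_A]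
  exact ⟨x' ⬝ᵥ v + (y' + Amat 7 *ᵥ v) ⬝ᵥ w, by ring⟩

lemma gg_congr2 {x x'} (h : ckMk x = ckMk x') : (16:ℤ) ∣ gg x x - gg x' x' := by
  obtain ⟨w, rfl⟩ := (ckMk_eq _ _).1 h
  rw [gg_add_left, gg_add_right, gg_add_right, gg_A, gg_comm (Amat 7 *ᵥ w), gg_A, gg_A]
  have : (Amat 7 *ᵥ w) ⬝ᵥ w = 2 * (((mM * mMᵀ) *ᵥ w) ⬝ᵥ w) := by
    rw [amm, Matrix.smul_mulVec, smul_dotProduct, smul_eq_mul]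
  rw [this]
  exact ⟨x' ⬝ᵥ w + ((mM * mMᵀ) *ᵥ w) ⬝ᵥ w, by ring⟩

lemma circ_eq (a b : ℤ) (n : ℕ) (hn : 0 < n) :
    (((a : ℚ) / n : ℚ) : AddCircle (1:ℚ)) = (((b:ℚ) / n : ℚ) : AddCircle (1:ℚ)) ↔
      (n:ℤ) ∣ a - b := by
  have hn' : (n:ℚ) ≠ 0 := by positivity
  rw [← sub_eq_zero, ← AddCircle.coe_sub, AddCircle.coe_eq_zero_iff]
  constructor
  · rintro ⟨m, hm⟩
    refine ⟨m, ?_⟩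
    rw [← sub_div, eq_div_iff hn'] at hm
    have : ((m * n : ℤ) : ℚ) = ((a - b : ℤ) : ℚ) := by push_cast; simpa using hm
    have := Int.cast_injective this
    rw [← this, mul_comm]
  · rintro ⟨m, hm⟩
    refine ⟨m, ?_⟩
    have : (a:ℚ) - b = n * m := by exact_mod_cast hm
    rw [← sub_div, this]
    field_simp
    simp

lemma invA : (AmatQ 7)⁻¹ = (1/8 : ℚ) • ((uMᵀ * uM).map (Int.cast : ℤ → ℚ)) := by
  apply Matrix.inv_eq_right_inv
  have h := congrArg (fun X : Matrix (Fin 7) (Fin 7) ℤ => X.map (Int.castRingHom ℚ)) ag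
  simp only [Matrix.map_mul] at h
  have h8 : (((8:ℤ) • (1 : Matrix (Fin 7) (Fin 7) ℤ)).map (Int.castRingHom ℚ)) = (8:ℚ) • 1 := by
    ext i j
    rw [Matrix.map_apply, Matrix.smul_apply, Matrix.smul_apply, Matrix.one_apply, Matrix.one_apply]
    by_cases hij : i = j <;> simp [hij]
  rw [h8] at h
  have h' : AmatQ 7 * ((uMᵀ * uM).map (Int.cast : ℤ → ℚ)) = (8:ℚ) • 1 := by
    rw [← h]; congr 1; ext i j; simp [Matrix.mul_apply]
  rw [Matrix.mul_smul, h', smul_smul]; norm_num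

lemma ratVec_eq (x y : Fin 7 → ℤ) :
    ratVec x ⬝ᵥ ((AmatQ 7)⁻¹ *ᵥ ratVec y) = (gg x y : ℚ) / 8 := by
  rw [invA, gg_eq, Matrix.smul_mulVec, dotProduct_smul, smul_eq_mul]
  have : ratVec x ⬝ᵥ ((uMᵀ * uM).map (Int.cast : ℤ → ℚ)) *ᵥ ratVec y
      = ((x ⬝ᵥ ((uMᵀ * uM) *ᵥ y) : ℤ) : ℚ) := by
    simp only [dotProduct, Matrix.mulVec, ratVec, Matrix.map_apply]; push_cast; rfl
  rw [this]; ring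

lemma link_iff (x y x' y' : Fin 7 → ℤ) :
    linkR 7 x' y' = linkR 7 x y ↔ (8:ℤ) ∣ gg x' y' - gg x y := by
  unfold linkR; rw [ratVec_eq, ratVec_eq]
  exact_mod_cast circ_eq _ _ 8 (by norm_num)

lemma quad_val (x : Fin 7 → ℤ) :
    (ratVec x ⬝ᵥ (((AmatQ 7)⁻¹ * QmatQ 7 * (AmatQ 7)⁻¹) *ᵥ ratVec x) : ℚ) = (gg x x : ℚ) / 16 := by
  set I := (AmatQ 7)⁻¹ with hI
  have hA : AmatQ 7 = QmatQ 7 + (QmatQ 7)ᵀ := by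
    ext i j; simp [AmatQ, QmatQ, Amat]
  have hsym : Iᵀ = I := by
    rw [hI, Matrix.transpose_nonsing_inv, hA, Matrix.transpose_add, Matrix.transpose_transpose,
      add_comm]
  have hIA : I * AmatQ 7 = 1 := by
    apply Matrix.nonsing_inv_mul
    rw [isUnit_iff_ne_zero]
    intro h0
    have h2 : I = 0 := by rw [hI]; exact Matrix.nonsing_inv_apply_not_isUnit _ (by simp [h0])
    have := congrFun (congrFun (invA.symm.trans h2) 1) 1
    simp [uM, Matrix.mul_apply] at this
  have e1 : ratVec x ⬝ᵥ ((I * QmatQ 7 * I) *ᵥ ratVec x)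
     = ratVec x ⬝ᵥ ((I * (QmatQ 7)ᵀ * I) *ᵥ ratVec x) := by
    have : (I * (QmatQ 7)ᵀ * I) = (I * QmatQ 7 * I)ᵀ := by
      rw [Matrix.transpose_mul, Matrix.transpose_mul, hsym, Matrix.mul_assoc]
    rw [this, Matrix.mulVec_transpose, Matrix.dotProduct_mulVec, dotProduct_comm]
  have e2 : ratVec x ⬝ᵥ ((I * QmatQ 7 * I) *ᵥ ratVec x)
     + ratVec x ⬝ᵥ ((I * (QmatQ 7)ᵀ * I) *ᵥ ratVec x) = (gg x x : ℚ) / 8 := by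
    rw [← dotProduct_add, ← Matrix.add_mulVec, ← Matrix.add_mul, ← Matrix.mul_add, ← hA, hIA,
      Matrix.one_mul, ratVec_eq]
  linarith

lemma quad_iff (x x' : Fin 7 → ℤ) :
    quadR 7 x' = quadR 7 x ↔ (16:ℤ) ∣ gg x' x' - gg x x := by
  unfold quadR; rw [quad_val, quad_val]
  exact_mod_cast circ_eq _ _ 16 (by norm_num)

lemma pres_iff (φ : Coker 7 ≃+ Coker 7) : PreservesBoundaryForms 7 φ ↔
    (∀ x y x' y' : Fin 7 → ℤ, ckMk x' = φ (ckMk x) → ckMk y' = φ (ckMk y) →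
      (8:ℤ) ∣ gg x' y' - gg x y) ∧
    (∀ x x' : Fin 7 → ℤ, ckMk x' = φ (ckMk x) → (16:ℤ) ∣ gg x' x' - gg x x) := by
  unfold PreservesBoundaryForms
  simp only [link_iff, quad_iff]

lemma ckMk_surj (c : Coker 7) : ∃ x, ckMk x = c := Submodule.Quotient.mk_surjective _ c

lemma ckMk_add (x y : Fin 7 → ℤ) : ckMk (x + y) = ckMk x + ckMk y := rfl

lemma pres_trans {φ ψ : Coker 7 ≃+ Coker 7} (h : PreservesBoundaryForms 7 φ)
    (h' : PreservesBoundaryForms 7 ψ) : PreservesBoundaryForms 7 (φ.trans ψ) := by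
  rw [pres_iff] at *
  constructor
  · intro x y x' y' hx hy
    obtain ⟨a, ha⟩ := ckMk_surj (φ (ckMk x))
    obtain ⟨b, hb⟩ := ckMk_surj (φ (ckMk y))
    have h1 := h.1 x y a b ha hb
    have h2 := h'.1 a b x' y' (by rw [ha]; exact hx) (by rw [hb]; exact hy)
    have := dvd_add h2 h1
    rwa [sub_add_sub_cancel] at this
  · intro x x' hx
    obtain ⟨a, ha⟩ := ckMk_surj (φ (ckMk x))
    have h1 := h.2 x a ha
    have h2 := h'.2 a x' (by rw [ha]; exact hx)
    have := dvd_add h2 h1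
    rwa [sub_add_sub_cancel] at this

/-- reflection data -/
def rv (k : Fin 8) : Fin 7 → ℤ := fun i => if k = 7 then 0 else if (i:ℕ) = k then 0 else 1
def cv (k : Fin 8) : Fin 7 → ℤ := fun i => if k = 7 then 0 else if i = 0 then -3 else
  if (i:ℕ) = k then 0 else 1
def cc (k : Fin 8) : Matrix (Fin 7) (Fin 7) ℤ := Matrix.of fun i j => cv k i * cv k j
def rr (k : Fin 8) : Matrix (Fin 7) (Fin 7) ℤ := Matrix.of fun i j => rv k i * rv k j
def RM (k : Fin 8) : Matrix (Fin 7) (Fin 7) ℤ := 1 - (mM * mMᵀ) * cc k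

lemma RA : ∀ k, RM k * Amat 7 = Amat 7 * (RM k)ᵀ := by unfold Amat Qmat; decide +kernel
lemma RR : ∀ k, RM k * RM k = 1 + Amat 7 * ((2:ℤ) • cc k) := by unfold Amat Qmat; decide +kernel
lemma RG : ∀ k, (RM k)ᵀ * (uMᵀ * uM) * RM k = uMᵀ * uM + (16:ℤ) • cc k := by decide +kernel
lemma uR : ∀ k, uM * RM k = uM - rr k * uM := by decide +kernel

def rlin (k : Fin 8) : Coker 7 →ₗ[ℤ] Coker 7 :=
  Submodule.mapQ _ _ (RM k).mulVecLin (by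
    rintro _ ⟨w, rfl⟩
    refine ⟨(RM k)ᵀ *ᵥ w, ?_⟩
    simp only [Matrix.mulVecLin_apply, Matrix.mulVec_mulVec, RA])

lemma rlin_mk (k x) : rlin k (ckMk x) = ckMk (RM k *ᵥ x) := rfl

lemma rlin_inv (k) : Function.Involutive (rlin k) := by
  intro c
  obtain ⟨x, rfl⟩ := ckMk_surj c
  rw [rlin_mk, rlin_mk, ckMk_eq]
  refine ⟨((2:ℤ) • cc k) *ᵥ x, ?_⟩
  rw [Matrix.mulVec_mulVec, RR, Matrix.add_mulVec, Matrix.one_mulVec, Matrix.mulVec_mulVec]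

def rho (k : Fin 8) : Coker 7 ≃+ Coker 7 := (LinearEquiv.ofInvolutive (rlin k) (rlin_inv k)).toAddEquiv

lemma rho_mk (k x) : rho k (ckMk x) = ckMk (RM k *ᵥ x) := rfl
lemma rho_rho (k c) : rho k (rho k c) = c := rlin_inv k c

lemma gg_R (k x y) : gg (RM k *ᵥ x) (RM k *ᵥ y) = gg x y + 16 * (x ⬝ᵥ (cc k *ᵥ y)) := by
  rw [gg_eq, gg_eq]
  have : (RM k *ᵥ x) ⬝ᵥ ((uMᵀ * uM) *ᵥ (RM k *ᵥ y))
      = x ⬝ᵥ (((RM k)ᵀ * (uMᵀ * uM) * RM k) *ᵥ y) := by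
    conv_rhs => rw [Matrix.mul_assoc, ← Matrix.mulVec_mulVec, Matrix.dotProduct_mulVec x,
      Matrix.vecMul_transpose]
    rw [Matrix.mulVec_mulVec _ _ (RM k)]
  rw [this, RG, Matrix.add_mulVec, dotProduct_add, Matrix.smul_mulVec, dotProduct_smul, smul_eq_mul]

lemma pres_rho (k) : PreservesBoundaryForms 7 (rho k) := by
  rw [pres_iff]
  constructor
  · intro x y x' y' hx hy
    rw [rho_mk] at hx hy
    have h1 := gg_congr hx hy
    rw [gg_R] at h1
    obtain ⟨t, ht⟩ := h1
    exact ⟨t + 2 * (x ⬝ᵥ (cc k *ᵥ y)), by linarith⟩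
  · intro x x' hx
    rw [rho_mk] at hx
    have h1 := gg_congr2 hx
    rw [gg_R] at h1
    obtain ⟨t, ht⟩ := h1
    exact ⟨t + x ⬝ᵥ (cc k *ᵥ x), by linarith⟩

/-- the 28 parity vectors, indexed by pairs from an 8 element set -/
def pairT (a b : Fin 8) : Fin 7 → ZMod 2 := fun i =>
  if a = 7 then (if (b:ℕ) = i then 1 else 0)
  else if b = 7 then (if (a:ℕ) = i then 1 else 0)
  else if (i:ℕ) = a ∨ (i:ℕ) = b then 0 else 1

def star (k : Fin 8) (X : Fin 7 → ZMod 2) : Prop := ∃ j, j ≠ k ∧ X = pairT k j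
instance (k X) : Decidable (star k X) := by unfold star; infer_instance

def dt (X Y : Fin 7 → ZMod 2) : ZMod 2 := ∑ i, X i * Y i

def rz (k : Fin 8) : Fin 7 → ZMod 2 := fun i => if k = 7 then 0 else if (i:ℕ) = k then 0 else 1

def refl (k : Fin 8) (X : Fin 7 → ZMod 2) : Fin 7 → ZMod 2 := fun i => X i - dt X (rz k) * rz k i

lemma wt_pair : ∀ X : Fin 7 → ZMod 2, (∑ i, (X i).val) % 4 = 1 → ∃ a b, a ≠ b ∧ X = pairT a b := by
  decide +kernel

lemma refl_star : ∀ k j : Fin 8, j ≠ k → star 7 (refl k (pairT k j)) := by decide +kernel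
lemma refl_star' : ∀ k j : Fin 8, j ≠ 7 → star k (refl k (pairT 7 j)) := by decide +kernel

lemma pair_orth : ∀ a b c d : Fin 8, a ≠ b → c ≠ d → dt (pairT a b) (pairT c d) = 0 →
    ∃ k, star k (pairT a b) ∧ star k (pairT c d) := by decide +kernel

lemma pair_symm : ∀ a b, pairT a b = pairT b a := by decide +kernel

/-- four pairwise meeting pairs, the first two meeting at `k`. -/
lemma quad_star : ∀ k a b : Fin 8, a ≠ k → b ≠ k →
    dt (pairT k a) (pairT k b) = 0 → ∀ c d, c ≠ d →
    dt (pairT k a) (pairT c d) = 0 → dt (pairT k b) (pairT c d) = 0 →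
    (c = k ∨ d = k ∨ (c = a ∧ d = b) ∨ (c = b ∧ d = a)) := by decide +kernel

lemma tri : ∀ k a b : Fin 8, a ≠ k → b ≠ k → dt (pairT k a) (pairT k b) = 0 → ∀ j, j ≠ k →
    dt (pairT a b) (pairT k j) = 0 → dt (pairT k a) (pairT k j) = 0 →
    dt (pairT k b) (pairT k j) = 0 → False := by decide +kernel

lemma tri_self : ∀ a b : Fin 8, a ≠ b → dt (pairT a b) (pairT a b) ≠ 0 := by decide +kernel

lemma star_uniq : ∀ k k' : Fin 8, k ≠ k' → ∀ a b : Fin 8, a ≠ k → b ≠ k →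
   dt (pairT k a) (pairT k b) = 0 → star k' (pairT k a) → star k' (pairT k b) → False := by
  decide +kernel

lemma stars (T : Fin 7 → Fin 7 → ZMod 2) (h1 : ∀ i, ∃ a b, a ≠ b ∧ T i = pairT a b)
    (h2 : ∀ i j, i ≠ j → dt (T i) (T j) = 0) : ∃ k, ∀ i, star k (T i) := by
  have ⟨k, ha, hb⟩ : ∃ k, star k (T 0) ∧ star k (T 1) := by
    obtain ⟨a, b, hab, h0⟩ := h1 0
    obtain ⟨c, d, hcd, h0'⟩ := h1 1
    have := h2 0 1 (by decide)
    rw [h0, h0'] at *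
    exact pair_orth a b c d hab hcd this
  refine ⟨k, ?_⟩
  obtain ⟨a, hak, ha⟩ := ha
  obtain ⟨b, hbk, hb⟩ := hb
  have hab := h2 0 1 (by decide)
  rw [ha, hb] at hab
  have aux : ∀ i, i ≠ 0 → i ≠ 1 → star k (T i) ∨ T i = pairT a b := by
    intro i h0 h1'
    obtain ⟨c, d, hcd, hi⟩ := h1 i
    have e1 := h2 0 i h0.symm
    have e2 := h2 1 i h1'.symm
    rw [ha, hi] at e1
    rw [hb, hi] at e2
    rcases quad_star k a b hak hbk hab c d hcd e1 e2 with h | h | ⟨h, h'⟩ | ⟨h, h'⟩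
    · subst h; exact Or.inl ⟨d, hcd.symm, hi⟩
    · subst h; exact Or.inl ⟨c, hcd, by rw [hi, pair_symm]⟩
    · subst h h'; exact Or.inr hi
    · subst h h'; exact Or.inr (by rw [hi, pair_symm])
  have hne : a ≠ b := by
    rintro rfl
    exact tri_self k a hak.symm hab
  intro i
  by_cases hi0 : i = 0
  · subst hi0; exact ⟨a, hak, ha⟩
  by_cases hi1 : i = 1
  · subst hi1; exact ⟨b, hbk, hb⟩
  rcases aux i hi0 hi1 with h | h
  · exact h
  exfalso
  obtain ⟨m, hm0, hm1, hmi⟩ : ∃ m : Fin 7, m ≠ 0 ∧ m ≠ 1 ∧ m ≠ i := by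
    have : ∀ i : Fin 7, ∃ m : Fin 7, m ≠ 0 ∧ m ≠ 1 ∧ m ≠ i := by decide
    exact this i
  rcases aux m hm0 hm1 with h' | h'
  · obtain ⟨j, hj, h'⟩ := h'
    refine tri k a b hak hbk hab j hj ?_ ?_ ?_
    · rw [← h, ← h']; exact h2 i m hmi.symm
    · rw [← ha, ← h']; exact h2 0 m hm0.symm
    · rw [← hb, ← h']; exact h2 1 m hm1.symm
  · have := h2 i m hmi.symm
    rw [h, h'] at this
    exact tri_self a b hne this

def par (x : Fin 7 → ℤ) : Fin 7 → ZMod 2 := fun i => ((uv x i / 2 : ℤ) : ZMod 2)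

lemma uv_zero (x : Fin 7 → ℤ) : uv x 0 = - x 0 := by rw [uv_apply]; simp

lemma uv_par (x : Fin 7 → ℤ) (i) : ∃ m, uv x i = - x 0 + 2 * m := by
  rw [uv_apply]; split_ifs
  · exact ⟨0, by ring⟩
  · exact ⟨x i, by ring⟩

lemma uv_even {x : Fin 7 → ℤ} (h : 2 ∣ x 0) (i) : uv x i = 2 * (uv x i / 2) := by
  obtain ⟨m, hm⟩ := uv_par x i
  omega

lemma gg_parity (x : Fin 7 → ℤ) : ∃ K, gg x x = 7 * (x 0)^2 + 4 * K := by
  choose m hm using uv_par x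
  refine ⟨∑ i, (m i ^ 2 - x 0 * m i), ?_⟩
  simp only [gg, dotProduct, hm, Fin.sum_univ_seven]; ring

lemma even_of_gg {x : Fin 7 → ℤ} (h : Even (gg x x)) : 2 ∣ x 0 := by
  obtain ⟨K, hK⟩ := gg_parity x
  rw [hK] at h
  have : Even (x 0) := by
    by_contra hh
    rw [Int.not_even_iff_odd] at hh
    obtain ⟨m, hm⟩ := hh
    obtain ⟨t, ht⟩ := h
    rw [hm] at ht
    ring_nf at ht
    omega
  exact even_iff_two_dvd.1 this

lemma odd_of_gg {x : Fin 7 → ℤ} (h : ¬ Even (gg x x)) : ¬ 2 ∣ x 0 := by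
  obtain ⟨K, hK⟩ := gg_parity x
  rw [hK] at h
  rintro ⟨m, hm⟩
  exact h ⟨14 * m ^ 2 + 2 * K, by rw [hm]; ring⟩

lemma gg_half {x y : Fin 7 → ℤ} (hx : 2 ∣ x 0) (hy : 2 ∣ y 0) :
    gg x y = 4 * ∑ i, (uv x i / 2) * (uv y i / 2) := by
  unfold gg dotProduct
  rw [Finset.mul_sum]
  refine Finset.sum_congr rfl fun i _ => ?_
  conv_lhs => rw [uv_even hx i, uv_even hy i]
  ring

lemma val_sq (n : ℤ) : ∃ m : ℤ, n * n = (((n : ZMod 2)).val : ℤ) + 4 * m := by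
  rcases Int.even_or_odd' n with ⟨m, h | h⟩
  · refine ⟨m * m, ?_⟩
    have : ((n : ℤ) : ZMod 2) = 0 := by
      rw [h]; push_cast; rw [show (2 : ZMod 2) = 0 from rfl]; ring
    rw [this, h]; simp; ring
  · refine ⟨m * m + m, ?_⟩
    have : ((n : ℤ) : ZMod 2) = 1 := by
      rw [h]; push_cast; rw [show (2 : ZMod 2) = 0 from rfl]; ring
    rw [this, h]
    rw [show (1 : ZMod 2).val = 1 from rfl]; push_cast; ring

lemma par_pair {x : Fin 7 → ℤ} (hx : 2 ∣ x 0) (h : 16 ∣ gg x x - 4) :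
    ∃ a b, a ≠ b ∧ par x = pairT a b := by
  apply wt_pair
  rw [gg_half hx hx] at h
  choose m hm using val_sq
  have e : ∑ i, (uv x i / 2) * (uv x i / 2)
      = ((∑ i, (par x i).val : ℕ) : ℤ) + 4 * ∑ i, m (uv x i / 2) := by
    rw [Finset.mul_sum]; push_cast; rw [← Finset.sum_add_distrib]
    exact Finset.sum_congr rfl fun i _ => hm _
  rw [e] at h
  omega

lemma par_orth {x y : Fin 7 → ℤ} (hx : 2 ∣ x 0) (hy : 2 ∣ y 0) (h : 8 ∣ gg x y) :
    dt (par x) (par y) = 0 := by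
  rw [gg_half hx hy] at h
  have h2 : (2:ℤ) ∣ ∑ i, (uv x i / 2) * (uv y i / 2) := by omega
  have := (ZMod.intCast_zmod_eq_zero_iff_dvd _ 2).2 (by exact_mod_cast h2)
  rw [← this]
  unfold dt par; push_cast; rfl

def E (i : Fin 7) : Fin 7 → ℤ := fun j => mM j i

lemma uv_E (i j) : uv (E i) j = if j = i then 2 else 0 := by
  have := congrFun (congrFun um j) i
  rw [Matrix.mul_apply, Matrix.smul_apply, Matrix.one_apply] at this
  unfold uv Matrix.mulVec dotProduct E
  rw [this]; split_ifs <;> simp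

lemma gg_E (x i) : gg x (E i) = 2 * uv x i := by
  unfold gg dotProduct
  simp [uv_E]; ring

lemma gg_EE (i j) : gg (E i) (E j) = if j = i then 4 else 0 := by
  rw [gg_E, uv_E]; split_ifs <;> norm_num

lemma par_congr {x y : Fin 7 → ℤ} (h : ckMk x = ckMk y) (hy : 2 ∣ y 0) :
    2 ∣ x 0 ∧ par x = par y := by
  obtain ⟨w, rfl⟩ := (ckMk_eq _ _).1 h
  have e : ∀ i, uv (y + Amat 7 *ᵥ w) i = uv y i + 4 * (mMᵀ *ᵥ w) i := by
    intro i; rw [uv_add, uv_A]; rfl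
  constructor
  · have := e 0
    rw [uv_zero, uv_zero] at this
    omega
  · funext i
    unfold par
    rw [e, show uv y i + 4 * (mMᵀ *ᵥ w) i = uv y i + 2 * (2 * (mMᵀ *ᵥ w) i) by ring,
      Int.add_mul_ediv_left _ _ (by norm_num)]
    push_cast
    rw [show (2 : ZMod 2) = 0 from rfl]; ring

lemma uv_R (k x i) : uv (RM k *ᵥ x) i = uv x i - (∑ j, uv x j * rv k j) * rv k i := by
  unfold uv
  rw [Matrix.mulVec_mulVec, uR, Matrix.sub_mulVec, ← Matrix.mulVec_mulVec, Pi.sub_apply]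
  congr 1
  rw [Finset.sum_mul, Matrix.mulVec, dotProduct]
  refine Finset.sum_congr rfl fun j _ => ?_
  simp only [rr, Matrix.of_apply]
  ring

lemma rz_rv (k i) : ((rv k i : ℤ) : ZMod 2) = rz k i := by
  unfold rv rz; split_ifs <;> simp

lemma par_R (k) {x : Fin 7 → ℤ} (hx : 2 ∣ x 0) :
    2 ∣ (RM k *ᵥ x) 0 ∧ par (RM k *ᵥ x) = refl k (par x) := by
  have e : ∀ i, uv (RM k *ᵥ x) i = 2 * (uv x i / 2 - (∑ j, (uv x j / 2) * rv k j) * rv k i) := by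
    intro i
    rw [uv_R]
    have : ∑ j, uv x j * rv k j = 2 * ∑ j, (uv x j / 2) * rv k j := by
      rw [Finset.mul_sum]
      refine Finset.sum_congr rfl fun j _ => ?_
      conv_lhs => rw [uv_even hx j]
      ring
    rw [this]
    conv_lhs => rw [uv_even hx i]
    ring
  constructor
  · have := e 0
    rw [uv_zero] at this
    omega
  · funext i
    unfold par
    rw [e, Int.mul_ediv_cancel_left _ (by norm_num)]
    push_cast
    simp only [rz_rv]
    rfl

def starP (k : Fin 8) (φ : Coker 7 ≃+ Coker 7) : Prop :=
  ∀ i x, ckMk x = φ (ckMk (E i)) → 2 ∣ x 0 ∧ star k (par x)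

lemma rep_even {φ : Coker 7 ≃+ Coker 7} (h : PreservesBoundaryForms 7 φ) {i x}
    (hx : ckMk x = φ (ckMk (E i))) : 2 ∣ x 0 ∧ 16 ∣ gg x x - 4 := by
  rw [pres_iff] at h
  have h1 := h.2 _ _ hx
  rw [gg_EE, if_pos rfl] at h1
  exact ⟨even_of_gg (even_iff_two_dvd.2 (by omega)), h1⟩

lemma rep_orth {φ : Coker 7 ≃+ Coker 7} (h : PreservesBoundaryForms 7 φ) {i j x y}
    (hx : ckMk x = φ (ckMk (E i))) (hy : ckMk y = φ (ckMk (E j))) (hij : i ≠ j) :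
    dt (par x) (par y) = 0 := by
  apply par_orth (rep_even h hx).1 (rep_even h hy).1
  rw [pres_iff] at h
  have h1 := h.1 _ _ _ _ hx hy
  rwa [gg_EE, if_neg hij.symm, sub_zero] at h1

lemma exists_star {φ : Coker 7 ≃+ Coker 7} (h : PreservesBoundaryForms 7 φ) :
    ∃ k, starP k φ := by
  choose x hx using fun i => ckMk_surj (φ (ckMk (E i)))
  obtain ⟨k, hk⟩ := stars (fun i => par (x i))
    (fun i => par_pair (rep_even h (hx i)).1 (rep_even h (hx i)).2)
    (fun i j hij => rep_orth h (hx i) (hx j) hij)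
  refine ⟨k, fun i y hy => ?_⟩
  have := par_congr (hy.trans (hx i).symm) (rep_even h (hx i)).1
  exact ⟨this.1, by rw [this.2]; exact hk i⟩

lemma starP_uniq {φ : Coker 7 ≃+ Coker 7} (h : PreservesBoundaryForms 7 φ) {k k'}
    (hk : starP k φ) (hk' : starP k' φ) : k = k' := by
  by_contra hne
  obtain ⟨x, hx⟩ := ckMk_surj (φ (ckMk (E 0)))
  obtain ⟨y, hy⟩ := ckMk_surj (φ (ckMk (E 1)))
  obtain ⟨a, ha, ha'⟩ := (hk 0 x hx).2
  obtain ⟨b, hb, hb'⟩ := (hk 1 y hy).2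
  have h1 := (hk' 0 x hx).2
  have h2 := (hk' 1 y hy).2
  have h3 := rep_orth h hx hy (by decide)
  rw [ha'] at h1 h3
  rw [hb'] at h2 h3
  exact star_uniq k k' hne a b ha hb h3 h1 h2

lemma starP_rho {φ : Coker 7 ≃+ Coker 7} {k} (h : starP k φ) : starP 7 (φ.trans (rho k)) := by
  intro i x hx
  obtain ⟨y, hy⟩ := ckMk_surj (φ (ckMk (E i)))
  obtain ⟨h1, j, hj, h2⟩ := h i y hy
  rw [AddEquiv.trans_apply, ← hy, rho_mk] at hx
  have h3 := par_R k h1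
  have h4 := par_congr hx h3.1
  refine ⟨h4.1, ?_⟩
  rw [h4.2, h3.2, h2]
  exact refl_star k j hj

lemma starP_rho' {φ : Coker 7 ≃+ Coker 7} {k} (h : starP 7 φ) : starP k (φ.trans (rho k)) := by
  intro i x hx
  obtain ⟨y, hy⟩ := ckMk_surj (φ (ckMk (E i)))
  obtain ⟨h1, j, hj, h2⟩ := h i y hy
  rw [AddEquiv.trans_apply, ← hy, rho_mk] at hx
  have h3 := par_R k h1
  have h4 := par_congr hx h3.1
  refine ⟨h4.1, ?_⟩
  rw [h4.2, h3.2, h2]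
  exact refl_star' k j hj

lemma exists_N (S : Matrix (Fin 7) (Fin 7) ℤ) (hS : ∀ a, Odd (∑ b, S a b)) :
    ∃ N : Matrix (Fin 7) (Fin 7) ℤ, (2:ℤ) • N = mM * S * uM := by
  have key : ∀ i j, (2:ℤ) ∣ (mM * S * uM) i j := by
    intro i j
    by_cases hj : j = 0
    · subst hj
      have e : (mM * S * uM) i 0 = - ∑ a, mM i a * ∑ b, S a b := by
        rw [Matrix.mul_assoc, Matrix.mul_apply, ← Finset.sum_neg_distrib]
        refine Finset.sum_congr rfl fun a _ => ?_
        rw [Matrix.mul_apply, ← mul_neg, ← Finset.sum_neg_distrib]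
        congr 1
        refine Finset.sum_congr rfl fun b _ => ?_
        simp [uM]
      rw [e, dvd_neg]
      choose t ht using hS
      simp only [ht]
      by_cases hi : i = 0
      · subst hi
        apply Finset.dvd_sum
        intro a _
        apply Dvd.dvd.mul_right
        by_cases ha : a = 0 <;> simp [mM, ha]
      · have : ∑ a, mM i a * (2 * t a + 1) = 2 * ∑ a, mM i a * t a + ∑ a, mM i a := by
          rw [Finset.mul_sum, ← Finset.sum_add_distrib]
          exact Finset.sum_congr rfl fun a _ => by ring
        rw [this]
        have h0 : ∀ i, i ≠ 0 → ∑ a, mM i a = 0 := by decide +kernel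
        rw [h0 i hi, add_zero]
        exact dvd_mul_right _ _
    · rw [Matrix.mul_apply]
      apply Finset.dvd_sum
      intro a _
      apply Dvd.dvd.mul_left
      simp only [uM, Matrix.of_apply, if_neg hj]
      split_ifs <;> simp
  choose N hN using key
  exact ⟨Matrix.of N, by ext i j; rw [Matrix.smul_apply, hN]; simp⟩

lemma smul_inj {m : ℤ} (hm : m ≠ 0) {X Y : Matrix (Fin 7) (Fin 7) ℤ} (h : m • X = m • Y) : X = Y :=
  smul_right_injective _ hm h

lemma N_mul {S S' N N' : Matrix (Fin 7) (Fin 7) ℤ} (h : S' * S = 1)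
    (hN : (2:ℤ) • N = mM * S * uM) (hN' : (2:ℤ) • N' = mM * S' * uM) : N' * N = 1 := by
  apply smul_inj (m := 4) (by norm_num)
  calc (4:ℤ) • (N' * N) = ((2:ℤ) • N') * ((2:ℤ) • N) := by
        rw [Matrix.smul_mul, Matrix.mul_smul, smul_smul]; norm_num
    _ = mM * S' * (uM * mM) * S * uM := by rw [hN, hN']; simp only [Matrix.mul_assoc]
    _ = (2:ℤ) • (mM * (S' * S) * uM) := by
        rw [um]; simp only [Matrix.mul_smul, Matrix.smul_mul, Matrix.mul_one, Matrix.mul_assoc]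
    _ = (4:ℤ) • 1 := by rw [h, Matrix.mul_one, mu, smul_smul]; norm_num

lemma N_A {S' S N' : Matrix (Fin 7) (Fin 7) ℤ} (h : S' * S = 1) (hS : S'ᵀ = S)
    (hN' : (2:ℤ) • N' = mM * S' * uM) : N' * Amat 7 * N'ᵀ = Amat 7 := by
  have h1 : (2:ℤ) • (N' * mM) = (2:ℤ) • (mM * S') := by
    rw [← Matrix.smul_mul, hN', Matrix.mul_assoc _ uM, um, Matrix.mul_smul, Matrix.mul_one]
  have h2 := smul_inj (by norm_num) h1
  have h3 : mMᵀ * N'ᵀ = S * mMᵀ := by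
    rw [← Matrix.transpose_mul, h2, Matrix.transpose_mul, hS]
  rw [amm, Matrix.mul_smul, Matrix.smul_mul]
  congr 1
  calc N' * (mM * mMᵀ) * N'ᵀ = (N' * mM) * (mMᵀ * N'ᵀ) := by simp only [Matrix.mul_assoc]
    _ = mM * (S' * S) * mMᵀ := by rw [h2, h3]; simp only [Matrix.mul_assoc]
    _ = _ := by rw [h, Matrix.mul_one]

lemma uv_N {S N : Matrix (Fin 7) (Fin 7) ℤ} (hN : (2:ℤ) • N = mM * S * uM) (x) :
    uv (N *ᵥ x) = S *ᵥ uv x := by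
  have : uM * N = S * uM := by
    apply smul_inj (m := 2) (by norm_num)
    rw [← Matrix.mul_smul, hN, Matrix.mul_assoc, ← Matrix.mul_assoc uM, um, Matrix.smul_mul,
      Matrix.one_mul]
  unfold uv
  rw [Matrix.mulVec_mulVec, Matrix.mulVec_mulVec, this]

lemma star7_iff {X} (h : star 7 X) : ∃ s : Fin 7, ∀ i, X i = if i = s then 1 else 0 := by
  obtain ⟨j, hj, rfl⟩ := h
  revert j; decide +kernel

lemma zmod_one {n : ℤ} (h : (n : ZMod 2) = 1) : n % 2 = 1 := by
  have : (2:ℤ) ∣ n - 1 := by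
    have := (ZMod.intCast_zmod_eq_zero_iff_dvd (n - 1) 2).1 (by push_cast; rw [h]; ring)
    exact_mod_cast this
  omega

lemma zmod_zero {n : ℤ} (h : (n : ZMod 2) = 0) : n % 2 = 0 := by
  have := (ZMod.intCast_zmod_eq_zero_iff_dvd n 2).1 h
  have : (2:ℤ) ∣ n := by exact_mod_cast this
  omega

lemma uv_smul (c : ℤ) (x) : uv (c • x) = c • uv x := Matrix.mulVec_smul _ _ _

/-- an element of singleton parity is `± E s` -/
lemma sign_rep {x : Fin 7 → ℤ} (hx : 2 ∣ x 0) (h : star 7 (par x)) :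
    ∃ s : Fin 7, ∃ e : ℤ, (e = 1 ∨ e = -1) ∧ ckMk x = ckMk (e • E s) := by
  obtain ⟨s, hs⟩ := star7_iff h
  refine ⟨s, ?_⟩
  have hc : ∀ i, ∃ c : ℤ, uv x i / 2 = (if i = s then 1 else 0) + 2 * c := by
    intro i
    have h1 := hs i
    unfold par at h1
    split_ifs at h1 ⊢
    · exact ⟨(uv x i / 2) / 2, by have := zmod_one h1; omega⟩
    · exact ⟨(uv x i / 2) / 2, by have := zmod_zero h1; omega⟩
  choose c hc using hc
  rcases Int.even_or_odd (∑ i, c i) with he | ho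
  · refine ⟨1, Or.inl rfl, ?_⟩
    refine ckMk_of_uv _ _ c (fun i => ?_) he
    rw [uv_even hx i, hc, one_smul, uv_E]
    split_ifs <;> ring
  · refine ⟨-1, Or.inr rfl, ?_⟩
    refine ckMk_of_uv _ _ (fun i => c i + if i = s then 1 else 0) (fun i => ?_) ?_
    · rw [uv_even hx i, hc, uv_smul, Pi.smul_apply, uv_E]
      split_ifs <;> simp <;> ring
    · rw [Finset.sum_add_distrib]
      simpa using ho.add_one

lemma inIm_of_star {φ : Coker 7 ≃+ Coker 7} (h : PreservesBoundaryForms 7 φ) (hs : starP 7 φ) :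
    InBoundaryImage 7 φ := by
  have hrep : ∀ i, ∃ s : Fin 7, ∃ e : ℤ, (e = 1 ∨ e = -1) ∧ φ (ckMk (E i)) = ckMk (e • E s) := by
    intro i
    obtain ⟨x, hx⟩ := ckMk_surj (φ (ckMk (E i)))
    rw [← hx]
    exact sign_rep (hs i x hx).1 (hs i x hx).2
  choose σ e he hφ using hrep
  have hp := (pres_iff φ).1 h
  have gg_eE : ∀ x i, gg x (e i • E (σ i)) = 2 * (e i * uv x (σ i)) := by
    intro x i
    have : gg x (e i • E (σ i)) = e i * gg x (E (σ i)) := by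
      unfold gg; rw [uv_smul, dotProduct_smul, smul_eq_mul]
    rw [this, gg_E]; ring
  have hσ : Function.Injective σ := by
    intro i j hij
    by_contra hne
    have h1 := hp.1 _ _ _ _ (hφ i).symm (hφ j).symm
    rw [gg_EE, if_neg (Ne.symm hne), gg_eE, uv_smul, Pi.smul_apply, hij, uv_E, if_pos rfl] at h1
    rcases he i with h2 | h2 <;> rcases he j with h3 | h3 <;> rw [h2, h3] at h1 <;>
      norm_num at h1
  have hσs : Function.Surjective σ := Finite.surjective_of_injective hσ
  set S : Matrix (Fin 7) (Fin 7) ℤ := Matrix.of fun a b => if a = σ b then e b else 0 with hS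
  have hee : ∀ i, e i * e i = 1 := by intro i; rcases he i with h | h <;> rw [h] <;> norm_num
  have heo : ∀ i, Odd (e i) := by intro i; rcases he i with h | h <;> rw [h] <;> decide
  have hSS : Sᵀ * S = 1 := by
    ext i j
    rw [Matrix.mul_apply, Matrix.one_apply]
    simp only [hS, Matrix.transpose_apply, Matrix.of_apply, ite_mul, zero_mul,
      Finset.sum_ite_eq', Finset.sum_ite_eq, Finset.mem_univ, if_true]
    by_cases hij : i = j
    · subst hij; simp [hee]
    · rw [if_neg hij, if_neg (fun h => hij (hσ h)), mul_zero]
  obtain ⟨N, hN⟩ := exists_N S (by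
    intro a
    obtain ⟨b, rfl⟩ := hσs a
    rw [Finset.sum_eq_single b]
    · simp [hS, heo]
    · intro c _ hc
      simp only [hS, Matrix.of_apply]
      rw [if_neg (fun h => hc (hσ h).symm)]
    · simp)
  obtain ⟨N', hN'⟩ := exists_N Sᵀ (by
    intro a
    have : ∑ b, Sᵀ a b = e a := by simp [hS]
    rw [this]; exact heo a)
  have hNN := N_mul hSS hN hN'
  have ggN : ∀ x y, gg (N *ᵥ x) (N *ᵥ y) = gg x y := by
    intro x y
    unfold gg
    rw [uv_N hN, uv_N hN]
    have : S *ᵥ uv x = uv x ᵥ* Sᵀ := (Matrix.vecMul_transpose _ _).symm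
    rw [this, ← Matrix.dotProduct_mulVec, Matrix.mulVec_mulVec, hSS, Matrix.one_mulVec]
  have ggNE : ∀ x i, gg x (N *ᵥ E i) = 2 * (e i * uv x (σ i)) := by
    intro x i
    rw [← gg_eE]
    unfold gg
    congr 1
    rw [uv_N hN, uv_smul]
    funext a
    rw [Pi.smul_apply, uv_E]
    simp only [Matrix.mulVec, dotProduct, uv_E, hS, Matrix.of_apply]
    simp
  -- odd vectors
  have hodd : ∀ x : Fin 7 → ℤ, ¬ 2 ∣ x 0 → φ (ckMk x) = ckMk (N *ᵥ x) := by
    intro x hx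
    obtain ⟨t, ht⟩ := ckMk_surj (φ (ckMk x))
    rw [← ht]
    have hd : ∀ a, ∃ c, uv t a - uv (N *ᵥ x) a = 4 * c := by
      intro a
      obtain ⟨i, rfl⟩ := hσs a
      have h1 := hp.1 _ _ _ _ ht (hφ i).symm
      rw [← ggN x (E i), ggNE, gg_eE] at h1
      obtain ⟨m, hm⟩ := h1
      rcases he i with h2 | h2 <;> rw [h2] at hm
      · exact ⟨m, by linarith⟩
      · exact ⟨-m, by linarith⟩
    choose c hc using hd
    refine ckMk_of_uv _ _ c hc ?_
    have h2 := hp.2 _ _ ht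
    have hNodd : ¬ 2 ∣ (N *ᵥ x) 0 := by
      apply odd_of_gg
      rw [ggN]
      exact fun hh => hx (even_of_gg hh)
    have hm : ∀ i, ∃ m, uv (N *ᵥ x) i = 1 + 2 * m := by
      intro i
      obtain ⟨m, hm⟩ := uv_par (N *ᵥ x) i
      exact ⟨(uv (N *ᵥ x) i) / 2, by omega⟩
    choose m hm using hm
    have e1 : gg t t - gg x x = 8 * ∑ i, c i + 16 * ∑ i, (m i * c i + c i * c i) := by
      rw [← ggN x x]
      unfold gg dotProduct
      rw [Finset.mul_sum, Finset.mul_sum, ← Finset.sum_sub_distrib, ← Finset.sum_add_distrib]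
      refine Finset.sum_congr rfl fun i _ => ?_
      have : uv t i = 1 + 2 * m i + 4 * c i := by linarith [hc i, hm i]
      rw [this, hm]; ring
    rw [e1] at h2
    rw [even_iff_two_dvd]
    omega
  have hall : ∀ x : Fin 7 → ℤ, φ (ckMk x) = ckMk (N *ᵥ x) := by
    intro x
    by_cases hx : 2 ∣ x 0
    · set d : Fin 7 → ℤ := fun _ => 1
      have e1 : x = (x - d) + d := by abel
      rw [e1, ckMk_add, map_add, Matrix.mulVec_add, ckMk_add, hodd, hodd]
      · simp [d]
      · simp only [Pi.sub_apply, d]; omega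
    · exact hodd x hx
  refine ⟨N'ᵀ, ?_, ?_, ?_⟩
  · rw [Matrix.det_transpose]
    exact IsUnit.of_mul_eq_one N.det (by rw [← Matrix.det_mul, hNN, Matrix.det_one])
  · rw [Matrix.transpose_transpose]
    exact N_A hSS (Matrix.transpose_transpose S) hN'
  · intro x
    rw [hall, Matrix.transpose_transpose, Matrix.inv_eq_right_inv hNN]

lemma star_of_inIm {φ : Coker 7 ≃+ Coker 7} (h : InBoundaryImage 7 φ) : starP 7 φ := by
  obtain ⟨P, hdet, hP, hφ⟩ := h
  set N := (Pᵀ)⁻¹ with hNdef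
  have hPN : Pᵀ * N = 1 := Matrix.mul_nonsing_inv _ (by rwa [Matrix.det_transpose])
  have hNP : N * Pᵀ = 1 := Matrix.nonsing_inv_mul _ (by rwa [Matrix.det_transpose])
  have hG : Nᵀ * (uMᵀ * uM) * N = uMᵀ * uM := by
    have h1 : Nᵀ * (uMᵀ * uM) * N * Amat 7 = (8:ℤ) • 1 := by
      calc Nᵀ * (uMᵀ * uM) * N * Amat 7 = Nᵀ * (uMᵀ * uM) * N * (Pᵀ * Amat 7 * P) := by rw [hP]
        _ = Nᵀ * ((uMᵀ * uM) * ((N * Pᵀ) * Amat 7)) * P := by simp only [Matrix.mul_assoc]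
        _ = (8:ℤ) • (Nᵀ * P) := by
          rw [hNP, Matrix.one_mul, ga, Matrix.mul_smul, Matrix.mul_one, Matrix.smul_mul]
        _ = (8:ℤ) • (Pᵀ * N)ᵀ := by rw [Matrix.transpose_mul, Matrix.transpose_transpose]
        _ = _ := by rw [hPN, Matrix.transpose_one]
    apply smul_inj (m := 8) (by norm_num)
    calc (8:ℤ) • (Nᵀ * (uMᵀ * uM) * N)
        = (Nᵀ * (uMᵀ * uM) * N) * (Amat 7 * (uMᵀ * uM)) := by
          rw [ag, Matrix.mul_smul, Matrix.mul_one]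
      _ = (Nᵀ * (uMᵀ * uM) * N * Amat 7) * (uMᵀ * uM) := by simp only [Matrix.mul_assoc]
      _ = _ := by rw [h1, Matrix.smul_mul, Matrix.one_mul]
  intro i x hx
  rw [hφ] at hx
  have hgg : gg (N *ᵥ E i) (N *ᵥ E i) = 4 := by
    have h4 := gg_EE i i
    rw [if_pos rfl, gg_eq, ← hG] at h4
    rw [gg_eq, ← h4]
    conv_rhs => rw [Matrix.mul_assoc, ← Matrix.mulVec_mulVec, Matrix.dotProduct_mulVec (E i),
      Matrix.vecMul_transpose]
    rw [Matrix.mulVec_mulVec _ _ N]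
  have hev : 2 ∣ (N *ᵥ E i) 0 := even_of_gg (by rw [hgg]; decide)
  have hc := par_congr hx hev
  refine ⟨hc.1, ?_⟩
  rw [hc.2]
  have hpair := par_pair hev (by rw [hgg]; norm_num)
  have hv := gg_half hev hev
  rw [hgg] at hv
  have hv1 : ∑ j, (uv (N *ᵥ E i) j / 2) * (uv (N *ᵥ E i) j / 2) = 1 := by omega
  obtain ⟨a, b, hab, hpar⟩ := hpair
  have hle : ∀ j, par (N *ᵥ E i) j = 1 → 1 ≤ (uv (N *ᵥ E i) j / 2) * (uv (N *ᵥ E i) j / 2) := by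
    intro j hj
    have : uv (N *ᵥ E i) j / 2 ≠ 0 := by
      intro h0
      unfold par at hj
      rw [h0] at hj
      exact absurd hj (by decide)
    have := mul_self_pos.2 this
    omega
  have huniq : ∀ j k, par (N *ᵥ E i) j = 1 → par (N *ᵥ E i) k = 1 → j = k := by
    intro j k hj hk
    by_contra hne
    have h1 : ∑ l ∈ ({j, k} : Finset (Fin 7)), (uv (N *ᵥ E i) l / 2) * (uv (N *ᵥ E i) l / 2)
        ≤ ∑ l, (uv (N *ᵥ E i) l / 2) * (uv (N *ᵥ E i) l / 2) :=
      Finset.sum_le_sum_of_subset_of_nonneg (Finset.subset_univ _)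
        (fun l _ _ => mul_self_nonneg _)
    rw [Finset.sum_pair hne] at h1
    have := hle j hj
    have := hle k hk
    omega
  rw [hpar] at huniq ⊢
  revert a b
  have key : ∀ a b : Fin 8, a ≠ b → (∀ j k, pairT a b j = 1 → pairT a b k = 1 → j = k) →
    star 7 (pairT a b) := by decide +kernel
  intro a b hab _ hu
  exact key a b hab hu

end BM

/-- For h = 7, the image of the boundary map ∂ has index 8 in the group of all
automorphisms of the boundary forms; in particular ∂ is not surjective. -/
theorem boundary_map_index_h7 :
    Nat.card {φ : Coker 7 ≃+ Coker 7 // PreservesBoundaryForms 7 φ} =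
      8 * Nat.card {φ : Coker 7 ≃+ Coker 7 //
        PreservesBoundaryForms 7 φ ∧ InBoundaryImage 7 φ} ∧
    ∃ φ : Coker 7 ≃+ Coker 7, PreservesBoundaryForms 7 φ ∧ ¬ InBoundaryImage 7 φ := by
  constructor
  · let f : Fin 8 × {φ : Coker 7 ≃+ Coker 7 // PreservesBoundaryForms 7 φ ∧ InBoundaryImage 7 φ} →
        {φ : Coker 7 ≃+ Coker 7 // PreservesBoundaryForms 7 φ} :=
      fun p => ⟨p.2.1.trans (BM.rho p.1), BM.pres_trans p.2.2.1 (BM.pres_rho _)⟩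
    have hf : Function.Bijective f := by
      constructor
      · rintro ⟨k, φ, hφ, hφ'⟩ ⟨k', ψ, hψ, hψ'⟩ heq
        have h1 : φ.trans (BM.rho k) = ψ.trans (BM.rho k') := congrArg Subtype.val heq
        have h2 := BM.starP_rho' (k := k) (BM.star_of_inIm hφ')
        have h3 := BM.starP_rho' (k := k') (BM.star_of_inIm hψ')
        rw [← h1] at h3
        have hk := BM.starP_uniq (BM.pres_trans hφ (BM.pres_rho _)) h2 h3
        subst hk
        have : φ = ψ := by
          ext c
          have := DFunLike.congr_fun h1 c
          exact (BM.rho k).injective this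
        subst this
        rfl
      · rintro ⟨φ, hφ⟩
        obtain ⟨k, hk⟩ := BM.exists_star hφ
        have hp := BM.pres_trans hφ (BM.pres_rho k)
        refine ⟨⟨k, ⟨φ.trans (BM.rho k), hp, BM.inIm_of_star hp (BM.starP_rho hk)⟩⟩, ?_⟩
        apply Subtype.ext
        apply AddEquiv.ext
        intro c
        exact BM.rho_rho k _
    rw [← Nat.card_congr (Equiv.ofBijective f hf), Nat.card_prod, Nat.card_fin]
  · refine ⟨BM.rho 0, BM.pres_rho 0, fun h => ?_⟩
    have h7 := BM.star_of_inIm h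
    have h0 : BM.starP 7 (AddEquiv.refl (Coker 7)) := by
      apply BM.star_of_inIm
      exact ⟨1, by simp, by simp, fun x => by simp⟩
    have h0' := BM.starP_rho' (k := 0) h0
    exact absurd (BM.starP_uniq (BM.pres_rho 0) h7 h0') (by decide)
end
end
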